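/- arXiv:hep-th/9404042 — 3 statements merged into one kernel-verified Lean document; each statement's English description precedes it below -/
import Mathlib

section
/- Let τ be a symmetric 2×2 complex matrix with positive definite imaginary part. With θⱼ[ε] denoting the partial derivative ∂θ[ε](z|τ)/∂z_j at z = 0 and θ[ε] the theta constant θ[ε](0|τ), the following Rosenhain derivative formula holds: θ₁[01;01]·θ₂[11;01] − θ₂[01;01]·θ₁[11;01] = π²·θ[00;10]·θ[00;11]·θ[11;11]·θ[01;10]. -/
/-- Genus-2 Riemann theta function with characteristic `[a b; c d]`
(`(a,b) = ε'`, `(c,d) = ε''`), evaluated at `z = (z1, z2)` and period matrix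
`τ = ((t11, t12), (t12, t22))`. -/
noncomputable def theta2 (a b c d : ℝ) (z1 z2 t11 t12 t22 : ℂ) : ℂ :=
  ∑' m : ℤ × ℤ,
    Complex.exp
      ((Real.pi : ℂ) * Complex.I *
          (((m.1 : ℂ) + (a : ℂ) / 2) *
              (((m.1 : ℂ) + (a : ℂ) / 2) * t11 + ((m.2 : ℂ) + (b : ℂ) / 2) * t12) +
            ((m.2 : ℂ) + (b : ℂ) / 2) *
              (((m.1 : ℂ) + (a : ℂ) / 2) * t12 + ((m.2 : ℂ) + (b : ℂ) / 2) * t22)) +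
        2 * (Real.pi : ℂ) * Complex.I *
          (((m.1 : ℂ) + (a : ℂ) / 2) * (z1 + (c : ℂ) / 2) +
            ((m.2 : ℂ) + (b : ℂ) / 2) * (z2 + (d : ℂ) / 2)))

/-- The symmetric matrix `τ = ((t11, t12), (t12, t22))` has positive definite
imaginary part. -/
def posDefIm (t11 t12 t22 : ℂ) : Prop :=
  (!![t11.im, t12.im; t12.im, t22.im]).PosDef

/-- Partial derivative of the genus-2 theta function in the first argument `z₁`,
evaluated at `z = 0`. -/
noncomputable def theta2d1 (a b c d : ℝ) (t11 t12 t22 : ℂ) : ℂ :=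
  deriv (fun w : ℂ => theta2 a b c d w 0 t11 t12 t22) 0

/-- Partial derivative of the genus-2 theta function in the second argument `z₂`,
evaluated at `z = 0`. -/
noncomputable def theta2d2 (a b c d : ℝ) (t11 t12 t22 : ℂ) : ℂ :=
  deriv (fun w : ℂ => theta2 a b c d 0 w t11 t12 t22) 0

/-!
Let `J` be the Jacobian determinant and `P` the product of theta constants in the formula. Addition
formulas express products of theta constants and derivatives at `τ` through those at `2τ`, and
eliminating the other characteristics from them leaves the single relation
`J(2τ) P(τ) = J(τ) P(2τ)`. Hence `J / P` is constant along `τ, 2τ, 4τ, …`. For `τ` in an open cone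
its limit is found by comparing the leading exponentials of the theta series at `sτ` as `s → ∞`, so
the formula holds at `sτ` for all large `s`. Both sides being holomorphic, the identity theorem
extends it first along the ray to the whole cone, and then along complex lines from a point of the
cone to the rest of the convex set of all `τ` with positive definite imaginary part.
-/

open Complex Filter Topology
open scoped Real

section QuadraticForm

variable {ι : Type*} [Fintype ι]

/-- The value `ᵗx τ x` of the complex quadratic form with matrix `τ` at a real vector `x`. The
matrix is not required to be symmetric: only its symmetric part matters. -/
noncomputable def quadForm (τ : Matrix ι ι ℂ) (x : ι → ℝ) : ℂ :=
  ∑ i, ∑ j, τ i j * x i * x j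

lemma quadForm_add (τ τ' : Matrix ι ι ℂ) (x : ι → ℝ) :
    quadForm (τ + τ') x = quadForm τ x + quadForm τ' x := by
  simp [quadForm, add_mul, Finset.sum_add_distrib]

lemma quadForm_smul (s : ℂ) (τ : Matrix ι ι ℂ) (x : ι → ℝ) :
    quadForm (s • τ) x = s * quadForm τ x := by
  simp [quadForm, Finset.mul_sum, mul_assoc]

lemma quadForm_smul_vec (τ : Matrix ι ι ℂ) (r : ℝ) (x : ι → ℝ) :
    quadForm τ (r • x) = (r ^ 2 : ℝ) * quadForm τ x := by
  simp only [quadForm, Pi.smul_apply, smul_eq_mul, ofReal_mul, ofReal_pow, Finset.mul_sum]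
  exact Finset.sum_congr rfl fun i _ => Finset.sum_congr rfl fun j _ => by ring

lemma quadForm_neg_vec (τ : Matrix ι ι ℂ) (x : ι → ℝ) : quadForm τ (-x) = quadForm τ x := by
  simp [quadForm]

lemma quadForm_parallelogram (τ : Matrix ι ι ℂ) (x y : ι → ℝ) :
    quadForm τ (x + y) + quadForm τ (x - y) = 2 * (quadForm τ x + quadForm τ y) := by
  simp only [quadForm, ← Finset.sum_add_distrib, Finset.mul_sum, Pi.add_apply, Pi.sub_apply,
    ofReal_add, ofReal_sub]
  exact Finset.sum_congr rfl fun i _ => Finset.sum_congr rfl fun j _ => by ring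

lemma continuous_quadForm (τ : Matrix ι ι ℂ) : Continuous (quadForm τ) := by
  unfold quadForm
  fun_prop

lemma norm_quadForm_le (τ : Matrix ι ι ℂ) (x : ι → ℝ) :
    ‖quadForm τ x‖ ≤ (∑ i, ∑ j, ‖τ i j‖) * ‖x‖ ^ 2 := by
  simp only [quadForm, Finset.sum_mul]
  refine norm_sum_le_of_le _ fun i _ => norm_sum_le_of_le _ fun j _ => ?_
  rw [norm_mul, norm_mul, norm_real, norm_real, mul_assoc, sq]
  gcongr <;> exact norm_le_pi_norm x _

/-- The imaginary part of `τ` is positive definite as a quadratic form; for symmetric `τ` this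
says that `τ` lies in the Siegel upper half-space. -/
def HasPosDefIm (τ : Matrix ι ι ℂ) : Prop :=
  ∀ x : ι → ℝ, x ≠ 0 → 0 < (quadForm τ x).im

lemma HasPosDefIm.smul {τ : Matrix ι ι ℂ} (hτ : HasPosDefIm τ) {s : ℝ} (hs : 0 < s) :
    HasPosDefIm ((s : ℂ) • τ) := fun x hx => by
  rw [quadForm_smul, im_ofReal_mul]
  exact mul_pos hs (hτ x hx)

lemma convex_setOf_hasPosDefIm : Convex ℝ {τ : Matrix ι ι ℂ | HasPosDefIm τ} := by
  refine convex_iff_forall_pos.2 fun τ hτ τ' hτ' s t hs ht _ x hx => ?_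
  rw [← coe_smul s τ, ← coe_smul t τ', quadForm_add, add_im]
  exact add_pos (hτ.smul hs x hx) (hτ'.smul ht x hx)

lemma HasPosDefIm.exists_forall_le_im {τ : Matrix ι ι ℂ} (hτ : HasPosDefIm τ) :
    ∃ δ > 0, ∀ x, δ * ‖x‖ ^ 2 ≤ (quadForm τ x).im := by
  obtain ⟨δ, hδ, hsphere⟩ : ∃ δ > 0, ∀ x ∈ Metric.sphere (0 : ι → ℝ) 1,
      δ ≤ (quadForm τ x).im :=
    (isCompact_sphere 0 1).exists_forall_le'
      (continuous_im.comp (continuous_quadForm τ)).continuousOn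
      fun x hx => hτ x (ne_zero_of_mem_unit_sphere ⟨x, hx⟩)
  refine ⟨δ, hδ, fun x => ?_⟩
  rcases eq_or_ne x 0 with rfl | hx
  · simp [quadForm]
  have hnorm : ‖x‖ ≠ 0 := norm_ne_zero_iff.2 hx
  have hunit : ‖x‖⁻¹ • x ∈ Metric.sphere (0 : ι → ℝ) 1 := by
    simp [norm_smul, inv_mul_cancel₀ hnorm]
  calc δ * ‖x‖ ^ 2 ≤ (quadForm τ (‖x‖⁻¹ • x)).im * ‖x‖ ^ 2 := by gcongr; exact hsphere _ hunit
    _ = (quadForm τ x).im := by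
      rw [quadForm_smul_vec, im_ofReal_mul]
      field_simp

lemma HasPosDefIm.exists_eventually_le_im {τ : Matrix ι ι ℂ} (hτ : HasPosDefIm τ) :
    ∃ δ > 0, ∀ᶠ σ in 𝓝 τ, ∀ x, δ * ‖x‖ ^ 2 ≤ (quadForm σ x).im := by
  obtain ⟨δ, hδ, hle⟩ := hτ.exists_forall_le_im
  have hcont : Continuous fun σ : Matrix ι ι ℂ => ∑ i, ∑ j, ‖(σ - τ) i j‖ := by fun_prop
  have hnear : ∀ᶠ σ in 𝓝 τ, ∑ i, ∑ j, ‖(σ - τ) i j‖ < δ / 2 :=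
    hcont.continuousAt.eventually_lt_const (by simpa using half_pos hδ)
  refine ⟨δ / 2, half_pos hδ, hnear.mono fun σ hσ x => ?_⟩
  have hsplit : quadForm σ x = quadForm τ x + quadForm (σ - τ) x := by
    rw [← quadForm_add, add_sub_cancel]
  have hperturb : |(quadForm (σ - τ) x).im| ≤ δ / 2 * ‖x‖ ^ 2 :=
    (abs_im_le_norm _).trans ((norm_quadForm_le _ x).trans (by gcongr))
  rw [hsplit, add_im]
  linarith [hle x, neg_abs_le (quadForm (σ - τ) x).im]

lemma isOpen_setOf_hasPosDefIm : IsOpen {τ : Matrix ι ι ℂ | HasPosDefIm τ} := by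
  refine isOpen_iff_mem_nhds.2 fun τ hτ => ?_
  obtain ⟨δ, hδ, hnear⟩ := HasPosDefIm.exists_eventually_le_im hτ
  filter_upwards [hnear] with σ hσ x hx
  exact lt_of_lt_of_le (by positivity) (hσ x)

end QuadraticForm

section Summability

variable {ι : Type*} [Fintype ι]

/-- The point `m + a / 2` over which a theta series with upper characteristic `a` is summed. -/
noncomputable def charPoint (a m : ι → ℤ) : ι → ℝ := fun i => m i + a i / 2

lemma tendsto_norm_charPoint_cofinite (a : ι → ℤ) :
    Tendsto (fun m => ‖charPoint a m‖) cofinite atTop := by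
  have hnorm : Tendsto (fun m : ι → ℤ => ‖m‖) cofinite atTop := by
    rw [← cocompact_eq_cofinite]
    exact tendsto_norm_cocompact_atTop
  refine tendsto_atTop_mono (fun m => ?_) (tendsto_atTop_add_const_right _ (-‖charPoint a 0‖) hnorm)
  have hcast : ‖m‖ = ‖charPoint a m - charPoint a 0‖ := by
    simp only [Pi.norm_def, Pi.sub_apply, charPoint, add_sub_add_right_eq_sub, Pi.zero_apply,
      Int.cast_zero, sub_zero]
    rfl
  rw [hcast, ← sub_eq_add_neg]
  linarith [norm_sub_le (charPoint a m) (charPoint a 0)]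

lemma summable_norm_charPoint_rpow (a : ι → ℤ) {r : ℝ} (hr : r < -Fintype.card ι) :
    Summable fun m => ‖charPoint a m‖ ^ r := by
  let L := Submodule.span ℤ (Set.range (Pi.basisFun ℝ ι))
  have hmem (m : ι → ℤ) : (fun i => (m i : ℝ)) ∈ L := by
    rw [Module.Basis.mem_span_iff_repr_mem]
    simp
  have hrank : Module.finrank ℤ L = Fintype.card ι := by
    rw [ZLattice.rank ℝ L, Module.finrank_fintype_fun_eq_card]
  have hinj : Function.Injective fun m : ι → ℤ => (⟨_, hmem m⟩ : L) := fun m n h =>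
    funext fun i => Int.cast_injective (congrFun (Subtype.ext_iff.1 h) i)
  refine ((ZLattice.summable_norm_sub_rpow L r (by rwa [hrank]) (-charPoint a 0)).comp_injective
    hinj).congr fun m => ?_
  have hpoint : (fun i => (m i : ℝ)) - -charPoint a 0 = charPoint a m := by
    ext i
    simp [charPoint]
  rw [Function.comp_apply, hpoint]

lemma summable_exp_neg_sq_charPoint (a : ι → ℤ) {δ : ℝ} (hδ : 0 < δ) (R : ℝ) :
    Summable fun m => Real.exp (-δ * ‖charPoint a m‖ ^ 2 + R * ‖charPoint a m‖) :=
  summable_of_isBigO (summable_norm_charPoint_rpow a (sub_one_lt _))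
    ((rexp_neg_quadratic_isLittleO_rpow_atTop (neg_lt_zero.2 hδ) R _).isBigO.comp_tendsto
      (tendsto_norm_charPoint_cofinite a))

end Summability

section ThetaSeries

variable {ι : Type*} [Fintype ι]

/-- A weighted summand of the theta series with lower characteristic `c`. The weights `1` and
`coordWeight i` give the theta constants and, up to the factor `2πi`, their partial derivatives. -/
noncomputable def thetaSummand (w : (ι → ℝ) → ℂ) (c : ι → ℤ) (τ : Matrix ι ι ℂ) (x : ι → ℝ) : ℂ :=
  w x * cexp (π * I * (quadForm τ x + (∑ i, c i * x i : ℝ)))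

/-- The theta series at `z = 0` with integral characteristic `[a; c]`, each summand being weighted
by the value of `w` at the summation point. -/
noncomputable def thetaSeries (w : (ι → ℝ) → ℂ) (a c : ι → ℤ) (τ : Matrix ι ι ℂ) : ℂ :=
  ∑' m, thetaSummand w c τ (charPoint a m)

/-- The weight producing `(2πi)⁻¹ ∂/∂zᵢ` of the theta function. -/
noncomputable def coordWeight (i : ι) (x : ι → ℝ) : ℂ := x i

/-- At most exponential growth; theta series with such weights still converge, by the Gaussian
decay of their summands. -/
def HasExpGrowth (w : (ι → ℝ) → ℂ) : Prop :=
  ∃ R, ∀ x, ‖w x‖ ≤ Real.exp (R * ‖x‖)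

lemma hasExpGrowth_one : HasExpGrowth (1 : (ι → ℝ) → ℂ) := ⟨0, by simp⟩

lemma norm_coordWeight_le (i : ι) (x : ι → ℝ) : ‖coordWeight i x‖ ≤ ‖x‖ := by
  rw [coordWeight, norm_real]
  exact norm_le_pi_norm x i

lemma hasExpGrowth_coordWeight (i : ι) : HasExpGrowth (coordWeight i) :=
  ⟨1, fun x => by linarith [norm_coordWeight_le i x, Real.add_one_le_exp (1 * ‖x‖)]⟩

lemma thetaSummand_eq_weight_mul (w : (ι → ℝ) → ℂ) (c : ι → ℤ) (τ : Matrix ι ι ℂ) (x : ι → ℝ) :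
    thetaSummand w c τ x = w x * thetaSummand 1 c τ x := by
  simp [thetaSummand]

lemma norm_thetaSummand (w : (ι → ℝ) → ℂ) (c : ι → ℤ) (τ : Matrix ι ι ℂ) (x : ι → ℝ) :
    ‖thetaSummand w c τ x‖ = ‖w x‖ * Real.exp (-π * (quadForm τ x).im) := by
  rw [thetaSummand, norm_mul, norm_exp, mul_assoc, re_ofReal_mul, I_mul_re, add_im, ofReal_im,
    add_zero, mul_neg, neg_mul]

lemma norm_thetaSummand_le {w : (ι → ℝ) → ℂ} {R δ : ℝ} {τ : Matrix ι ι ℂ} {x : ι → ℝ}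
    (hw : ‖w x‖ ≤ Real.exp (R * ‖x‖)) (hτ : δ * ‖x‖ ^ 2 ≤ (quadForm τ x).im) (c : ι → ℤ) :
    ‖thetaSummand w c τ x‖ ≤ Real.exp (-(π * δ) * ‖x‖ ^ 2 + R * ‖x‖) := by
  calc ‖thetaSummand w c τ x‖ = ‖w x‖ * Real.exp (-π * (quadForm τ x).im) :=
        norm_thetaSummand w c τ x
    _ ≤ Real.exp (R * ‖x‖) * Real.exp (-π * (δ * ‖x‖ ^ 2)) := by
        gcongr ?_ * Real.exp ?_
        exact mul_le_mul_of_nonpos_left hτ (neg_nonpos.2 Real.pi_pos.le)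
    _ = Real.exp (-(π * δ) * ‖x‖ ^ 2 + R * ‖x‖) := by
        rw [← Real.exp_add]
        ring_nf

lemma summable_norm_thetaSummand {w : (ι → ℝ) → ℂ} (hw : HasExpGrowth w) (a c : ι → ℤ)
    {τ : Matrix ι ι ℂ} (hτ : HasPosDefIm τ) :
    Summable fun m => ‖thetaSummand w c τ (charPoint a m)‖ := by
  obtain ⟨R, hR⟩ := hw
  obtain ⟨δ, hδ, hle⟩ := hτ.exists_forall_le_im
  exact (summable_exp_neg_sq_charPoint a (mul_pos Real.pi_pos hδ) R).of_nonneg_of_le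
    (fun _ => norm_nonneg _) fun m => norm_thetaSummand_le (hR _) (hle _) c

lemma differentiableAt_thetaSeries_comp {w : (ι → ℝ) → ℂ} (hw : HasExpGrowth w) (a c : ι → ℤ)
    {γ : ℂ → Matrix ι ι ℂ} (hγ : ∀ i j, Differentiable ℂ fun s => γ s i j) {s₀ : ℂ}
    (hs₀ : HasPosDefIm (γ s₀)) :
    DifferentiableAt ℂ (fun s => thetaSeries w a c (γ s)) s₀ := by
  obtain ⟨R, hR⟩ := hw
  obtain ⟨δ, hδ, hnear⟩ := hs₀.exists_eventually_le_im
  have hγ_cont : Continuous γ := continuous_matrix fun i j => (hγ i j).continuous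
  obtain ⟨U, hU, hU_open, hs₀U⟩ := eventually_nhds_iff.1 (hγ_cont.continuousAt.eventually hnear)
  refine (differentiableOn_tsum_of_summable_norm
    (summable_exp_neg_sq_charPoint a (mul_pos Real.pi_pos hδ) R) (fun m => ?_) hU_open
    fun m s hs => norm_thetaSummand_le (hR _) (hU s hs _) c).differentiableAt
    (hU_open.mem_nhds hs₀U)
  simp only [thetaSummand, quadForm]
  fun_prop

lemma deriv_thetaSeries_exp_coord (i : ι) (a c : ι → ℤ) {τ : Matrix ι ι ℂ} (hτ : HasPosDefIm τ) :
    deriv (fun z => thetaSeries (fun x => cexp (2 * π * I * (x i * z))) a c τ) 0 =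
      2 * π * I * thetaSeries (coordWeight i) a c τ := by
  obtain ⟨δ, hδ, hle⟩ := hτ.exists_forall_le_im
  have hweight (x : ι → ℝ) (z : ℂ) (hz : z ∈ Metric.ball (0 : ℂ) 1) :
      ‖cexp (2 * π * I * (x i * z))‖ ≤ Real.exp (2 * π * ‖x‖) := by
    refine (norm_exp_le_exp_norm _).trans (Real.exp_le_exp.2 ?_)
    simp only [norm_mul, norm_I, norm_real, norm_ofNat, Real.norm_of_nonneg Real.pi_pos.le, mul_one]
    gcongr
    exact (mul_le_of_le_one_right (norm_nonneg _) (mem_ball_zero_iff.1 hz).le).trans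
      (norm_le_pi_norm x i)
  have hsum := hasSum_deriv_of_summable_norm
    (F := fun m z => thetaSummand (fun x => cexp (2 * π * I * (x i * z))) c τ (charPoint a m))
    (summable_exp_neg_sq_charPoint a (mul_pos Real.pi_pos hδ) (2 * π))
    (fun m => by unfold thetaSummand; fun_prop) Metric.isOpen_ball
    (fun m z hz => norm_thetaSummand_le (hweight _ z hz) (hle _) c)
    (Metric.mem_ball_self one_pos)
  refine hsum.tsum_eq.symm.trans ?_
  rw [thetaSeries, ← tsum_mul_left]
  refine tsum_congr fun m => ?_
  have hexp (v : ℂ) : HasDerivAt (fun z => cexp (2 * π * I * (v * z))) (2 * π * I * v) 0 := by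
    simpa using (((hasDerivAt_id (0 : ℂ)).const_mul v).const_mul (2 * π * I)).cexp
  exact ((hexp _).mul_const _).deriv.trans (by rw [thetaSummand, coordWeight]; ring)

end ThetaSeries

section Characteristics

variable {ι : Type*} [Fintype ι]

lemma cexp_pi_mul_I_mul_intCast (n : ℤ) : cexp (π * I * n) = (-1) ^ n := by
  rw [← exp_pi_mul_I, ← exp_int_mul, mul_comm]

lemma cexp_two_pi_mul_I_mul_charPoint (a b m : ι → ℤ) :
    cexp (2 * π * I * (∑ i, b i * charPoint a m i : ℝ)) = (-1) ^ (a ⬝ᵥ b) := by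
  have hint : 2 * (∑ i, b i * charPoint a m i : ℝ) = (2 * (m ⬝ᵥ b) + a ⬝ᵥ b : ℤ) := by
    push_cast [charPoint, dotProduct]
    rw [Finset.mul_sum, Finset.mul_sum, ← Finset.sum_add_distrib]
    exact Finset.sum_congr rfl fun i _ => by ring
  rw [show 2 * π * I * (∑ i, b i * charPoint a m i : ℝ) =
    π * I * ((2 * ∑ i, b i * charPoint a m i : ℝ) : ℂ) by push_cast; ring, hint, ofReal_intCast,
    cexp_pi_mul_I_mul_intCast, zpow_add₀ (by simp), Even.neg_one_zpow (by simp), one_mul]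

lemma thetaSeries_add_two_smul_upper (w : (ι → ℝ) → ℂ) (a b c : ι → ℤ) (τ : Matrix ι ι ℂ) :
    thetaSeries w (a + (2 : ℤ) • b) c τ = thetaSeries w a c τ := by
  rw [thetaSeries, thetaSeries,
    ← (Equiv.addRight b).tsum_eq fun m => thetaSummand w c τ (charPoint a m)]
  refine tsum_congr fun m => congrArg _ (funext fun i => ?_)
  simp only [charPoint, Pi.add_apply, Pi.smul_apply, smul_eq_mul, Equiv.coe_addRight]
  push_cast
  ring

lemma thetaSeries_add_two_smul_lower (w : (ι → ℝ) → ℂ) (a b c : ι → ℤ) (τ : Matrix ι ι ℂ) :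
    thetaSeries w a (c + (2 : ℤ) • b) τ = (-1) ^ (a ⬝ᵥ b) * thetaSeries w a c τ := by
  rw [thetaSeries, thetaSeries, ← tsum_mul_left]
  refine tsum_congr fun m => ?_
  rw [← cexp_two_pi_mul_I_mul_charPoint a b m, thetaSummand, thetaSummand, mul_left_comm,
    ← Complex.exp_add]
  have hlinear : (∑ i, (c + (2 : ℤ) • b) i * charPoint a m i : ℝ) =
      (∑ i, c i * charPoint a m i : ℝ) + 2 * (∑ i, b i * charPoint a m i : ℝ) := by
    simp [add_mul, Finset.sum_add_distrib, Finset.mul_sum, mul_assoc]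
  rw [hlinear]
  push_cast
  ring_nf

lemma thetaSeries_neg_weight (w : (ι → ℝ) → ℂ) (a c : ι → ℤ) (τ : Matrix ι ι ℂ) :
    thetaSeries (fun x => w (-x)) a c τ = (-1) ^ (a ⬝ᵥ c) * thetaSeries w a c τ := by
  rw [thetaSeries, thetaSeries, ← tsum_mul_left,
    ← (Equiv.subLeft (-a)).tsum_eq fun m => (-1) ^ (a ⬝ᵥ c) * thetaSummand w c τ (charPoint a m)]
  refine tsum_congr fun m => ?_
  have hreflect : charPoint a (-a - m) = -charPoint a m := by
    ext i
    simp [charPoint]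
    ring
  rw [Equiv.subLeft_apply, hreflect, ← cexp_two_pi_mul_I_mul_charPoint a c m, thetaSummand,
    thetaSummand, quadForm_neg_vec, mul_left_comm, ← Complex.exp_add]
  have hlinear : (∑ i, c i * (-charPoint a m) i : ℝ) = -∑ i, c i * charPoint a m i := by simp
  rw [hlinear]
  push_cast
  ring_nf

lemma thetaSeries_one_eq_zero_of_odd {a c : ι → ℤ} (h : Odd (a ⬝ᵥ c)) (τ : Matrix ι ι ℂ) :
    thetaSeries 1 a c τ = 0 := by
  have hneg := thetaSeries_neg_weight 1 a c τ
  rw [h.neg_one_zpow, neg_one_mul] at hneg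
  exact self_eq_neg.1 hneg

lemma thetaSeries_coordWeight_eq_zero_of_even (i : ι) {a c : ι → ℤ} (h : Even (a ⬝ᵥ c))
    (τ : Matrix ι ι ℂ) : thetaSeries (coordWeight i) a c τ = 0 := by
  have hneg := thetaSeries_neg_weight (coordWeight i) a c τ
  have hodd : thetaSeries (fun x => coordWeight i (-x)) a c τ =
      -thetaSeries (coordWeight i) a c τ := by
    simp [thetaSeries, thetaSummand, coordWeight, tsum_neg]
  rw [h.neg_one_zpow, one_mul, hodd] at hneg
  exact neg_eq_self.1 hneg

end Characteristics

section AdditionFormulas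

variable {ι : Type*}

/-- An element of `{0, 1}^ι` as an integral vector; these represent the classes of `ℤ^ι` modulo
`2ℤ^ι`. -/
def parityVec (e : ι → Fin 2) : ι → ℤ := fun i => (e i : ℕ)

lemma bijective_sum_add_parityVec_sub :
    Function.Bijective fun s : (ι → Fin 2) × (ι → ℤ) × (ι → ℤ) =>
      (s.2.1 + s.2.2 + parityVec s.1, s.2.1 - s.2.2) := by
  constructor
  · rintro ⟨e, p, q⟩ ⟨e', p', q'⟩ h
    have hcoord (i : ι) : p i + q i + (e i : ℕ) = p' i + q' i + (e' i : ℕ) ∧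
        p i - q i = p' i - q' i :=
      ⟨congrFun (congrArg Prod.fst h) i, congrFun (congrArg Prod.snd h) i⟩
    refine Prod.ext (funext fun i => Fin.ext ?_)
      (Prod.ext (funext fun i => ?_) (funext fun i => ?_)) <;>
    · have := hcoord i
      dsimp only
      omega
  · rintro ⟨m, n⟩
    refine ⟨(fun i => ⟨((m i - n i) % 2).toNat, by omega⟩, fun i => n i + (m i - n i) / 2,
      fun i => (m i - n i) / 2), Prod.ext (funext fun i => ?_) (funext fun i => ?_)⟩ <;>
    · simp only [parityVec, Pi.add_apply, Pi.sub_apply]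
      omega

variable [Fintype ι]

lemma tsum_charPoint_eq_sum_tsum_add_sub [DecidableEq ι] (a : ι → ℤ) (F : (ι → ℝ) → (ι → ℝ) → ℂ)
    (hF : Summable fun s : (ι → ℤ) × (ι → ℤ) => F (charPoint a s.1) (charPoint a s.2)) :
    ∑' s : (ι → ℤ) × (ι → ℤ), F (charPoint a s.1) (charPoint a s.2) =
      ∑ e, ∑' s : (ι → ℤ) × (ι → ℤ),
        F (charPoint (a + parityVec e) s.1 + charPoint (parityVec e) s.2)
          (charPoint (a + parityVec e) s.1 - charPoint (parityVec e) s.2) := by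
  let E := Equiv.ofBijective _ (bijective_sum_add_parityVec_sub (ι := ι))
  rw [← E.tsum_eq]
  refine (E.summable_iff.2 hF).tsum_prod.trans ((tsum_fintype _).trans
    (Finset.sum_congr rfl fun e _ => tsum_congr fun s => ?_))
  refine congrArg₂ F (funext fun i => ?_) (funext fun i => ?_) <;>
  · simp only [E, Equiv.ofBijective_apply, charPoint, Pi.add_apply, Pi.sub_apply]
    push_cast
    ring

lemma thetaSummand_add_mul_thetaSummand_sub (c c' : ι → ℤ) (τ : Matrix ι ι ℂ) (x y : ι → ℝ) :
    thetaSummand 1 c τ (x + y) * thetaSummand 1 c' τ (x - y) =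
      thetaSummand 1 (c + c') ((2 : ℂ) • τ) x * thetaSummand 1 (c - c') ((2 : ℂ) • τ) y := by
  simp only [thetaSummand, Pi.one_apply, one_mul, ← Complex.exp_add, ← mul_add, quadForm_smul]
  congr 2
  have hlinear : (∑ i, c i * (x + y) i : ℝ) + ∑ i, c' i * (x - y) i =
      (∑ i, (c + c') i * x i : ℝ) + ∑ i, (c - c') i * y i := by
    simp only [← Finset.sum_add_distrib, Pi.add_apply, Pi.sub_apply]
    push_cast
    exact Finset.sum_congr rfl fun i _ => by ring
  have hlinear' := congrArg ((↑) : ℝ → ℂ) hlinear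
  push_cast only [ofReal_add] at hlinear'
  linear_combination quadForm_parallelogram τ x y + hlinear'

lemma hasSum_weight_mul_thetaSummand_mul {w w' : (ι → ℝ) → ℂ} (hw : HasExpGrowth w)
    (hw' : HasExpGrowth w') (a a' c c' : ι → ℤ) {τ : Matrix ι ι ℂ} (hτ : HasPosDefIm τ) :
    HasSum (fun s : (ι → ℤ) × (ι → ℤ) => w (charPoint a s.1) * w' (charPoint a' s.2) *
        (thetaSummand 1 c τ (charPoint a s.1) * thetaSummand 1 c' τ (charPoint a' s.2)))
      (thetaSeries w a c τ * thetaSeries w' a' c' τ) := by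
  have hnorm := summable_norm_thetaSummand hw a c hτ
  have hnorm' := summable_norm_thetaSummand hw' a' c' hτ
  rw [thetaSeries, thetaSeries, tsum_mul_tsum_of_summable_norm hnorm hnorm']
  refine (summable_mul_of_summable_norm hnorm hnorm').hasSum.congr_fun fun s => ?_
  rw [thetaSummand_eq_weight_mul w, thetaSummand_eq_weight_mul w', mul_mul_mul_comm]

lemma HasPosDefIm.two_smul {τ : Matrix ι ι ℂ} (hτ : HasPosDefIm τ) :
    HasPosDefIm ((2 : ℂ) • τ) := by
  simpa using hτ.smul two_pos

variable [DecidableEq ι]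

lemma eq_sum_of_hasSum_weight_mul_thetaSummand_mul (W : (ι → ℝ) → (ι → ℝ) → ℂ) (a c c' : ι → ℤ)
    (τ : Matrix ι ι ℂ) {S : ℂ} {T : (ι → Fin 2) → ℂ}
    (hS : HasSum (fun s : (ι → ℤ) × (ι → ℤ) => W (charPoint a s.1) (charPoint a s.2) *
      (thetaSummand 1 c τ (charPoint a s.1) * thetaSummand 1 c' τ (charPoint a s.2))) S)
    (hT : ∀ e, HasSum (fun s : (ι → ℤ) × (ι → ℤ) =>
      W (charPoint (a + parityVec e) s.1 + charPoint (parityVec e) s.2)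
          (charPoint (a + parityVec e) s.1 - charPoint (parityVec e) s.2) *
        (thetaSummand 1 (c + c') ((2 : ℂ) • τ) (charPoint (a + parityVec e) s.1) *
          thetaSummand 1 (c - c') ((2 : ℂ) • τ) (charPoint (parityVec e) s.2))) (T e)) :
    S = ∑ e, T e := by
  rw [← hS.tsum_eq, tsum_charPoint_eq_sum_tsum_add_sub a
    (fun x y => W x y * (thetaSummand 1 c τ x * thetaSummand 1 c' τ y)) hS.summable]
  refine Finset.sum_congr rfl fun e _ => ?_
  simp only [thetaSummand_add_mul_thetaSummand_sub]
  exact (hT e).tsum_eq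

lemma thetaSeries_one_mul_one (a c c' : ι → ℤ) {τ : Matrix ι ι ℂ} (hτ : HasPosDefIm τ) :
    thetaSeries 1 a c τ * thetaSeries 1 a c' τ =
      ∑ e, thetaSeries 1 (a + parityVec e) (c + c') ((2 : ℂ) • τ) *
        thetaSeries 1 (parityVec e) (c - c') ((2 : ℂ) • τ) := by
  refine eq_sum_of_hasSum_weight_mul_thetaSummand_mul (fun _ _ => 1 * 1) a c c' τ
    (hasSum_weight_mul_thetaSummand_mul hasExpGrowth_one hasExpGrowth_one a a c c' hτ) fun e => ?_
  exact hasSum_weight_mul_thetaSummand_mul hasExpGrowth_one hasExpGrowth_one _ _ _ _ hτ.two_smul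

lemma thetaSeries_coordWeight_mul_one (i : ι) (a c c' : ι → ℤ) {τ : Matrix ι ι ℂ}
    (hτ : HasPosDefIm τ) :
    thetaSeries (coordWeight i) a c τ * thetaSeries 1 a c' τ =
      ∑ e, (thetaSeries (coordWeight i) (a + parityVec e) (c + c') ((2 : ℂ) • τ) *
          thetaSeries 1 (parityVec e) (c - c') ((2 : ℂ) • τ) +
        thetaSeries 1 (a + parityVec e) (c + c') ((2 : ℂ) • τ) *
          thetaSeries (coordWeight i) (parityVec e) (c - c') ((2 : ℂ) • τ)) := by
  have hcoord := hasExpGrowth_coordWeight i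
  refine eq_sum_of_hasSum_weight_mul_thetaSummand_mul (fun x _ => coordWeight i x * 1) a c c' τ
    (hasSum_weight_mul_thetaSummand_mul hcoord hasExpGrowth_one a a c c' hτ) fun e => ?_
  refine ((hasSum_weight_mul_thetaSummand_mul hcoord hasExpGrowth_one _ _ _ _ hτ.two_smul).add
    (hasSum_weight_mul_thetaSummand_mul hasExpGrowth_one hcoord _ _ _ _ hτ.two_smul)).congr_fun
    fun s => ?_
  simp only [coordWeight, Pi.add_apply, Pi.one_apply, ofReal_add]
  ring

lemma thetaSeries_coordWeight_mul_sub_mul (i j : ι) (a c c' : ι → ℤ) {τ : Matrix ι ι ℂ}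
    (hτ : HasPosDefIm τ) :
    thetaSeries (coordWeight i) a c τ * thetaSeries (coordWeight j) a c' τ -
        thetaSeries (coordWeight j) a c τ * thetaSeries (coordWeight i) a c' τ =
      ∑ e, -2 * (thetaSeries (coordWeight i) (a + parityVec e) (c + c') ((2 : ℂ) • τ) *
          thetaSeries (coordWeight j) (parityVec e) (c - c') ((2 : ℂ) • τ) -
        thetaSeries (coordWeight j) (a + parityVec e) (c + c') ((2 : ℂ) • τ) *
          thetaSeries (coordWeight i) (parityVec e) (c - c') ((2 : ℂ) • τ)) := by
  have hi := hasExpGrowth_coordWeight i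
  have hj := hasExpGrowth_coordWeight j
  refine eq_sum_of_hasSum_weight_mul_thetaSummand_mul
    (fun x y => coordWeight i x * coordWeight j y - coordWeight j x * coordWeight i y) a c c' τ
    ?_ fun e => ?_
  · refine ((hasSum_weight_mul_thetaSummand_mul hi hj a a c c' hτ).sub
      (hasSum_weight_mul_thetaSummand_mul hj hi a a c c' hτ)).congr_fun fun s => ?_
    ring
  · refine (((hasSum_weight_mul_thetaSummand_mul hi hj _ _ _ _ hτ.two_smul).sub
      (hasSum_weight_mul_thetaSummand_mul hj hi _ _ _ _ hτ.two_smul)).mul_left (-2)).congr_fun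
      fun s => ?_
    simp only [coordWeight, Pi.add_apply, Pi.sub_apply, ofReal_add, ofReal_sub]
    ring

end AdditionFormulas

section GenusTwoCharacteristics

lemma sum_fin_two_arrow {ι M : Type*} [Fintype ι] [AddCommMonoid M] (f : (Fin 2 → ι) → M) :
    ∑ e, f e = ∑ i, ∑ j, f ![i, j] := by
  rw [← (finTwoArrowEquiv ι).symm.sum_comp f, Fintype.sum_prod_type]
  rfl

lemma parityVec_vec (i j : Fin 2) : parityVec ![i, j] = ![((i : ℕ) : ℤ), ((j : ℕ) : ℤ)] := by
  ext k
  fin_cases k <;> rfl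

variable (w : (Fin 2 → ℝ) → ℂ) (a b c d : ℤ) (τ : Matrix (Fin 2) (Fin 2) ℂ)

lemma thetaSeries_upper_two_left :
    thetaSeries w ![2, b] ![c, d] τ = thetaSeries w ![0, b] ![c, d] τ := by
  simpa using thetaSeries_add_two_smul_upper w ![0, b] ![1, 0] ![c, d] τ

lemma thetaSeries_upper_two_right :
    thetaSeries w ![a, 2] ![c, d] τ = thetaSeries w ![a, 0] ![c, d] τ := by
  simpa using thetaSeries_add_two_smul_upper w ![a, 0] ![0, 1] ![c, d] τ

lemma thetaSeries_lower_two_left :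
    thetaSeries w ![a, b] ![2, d] τ = (-1) ^ a * thetaSeries w ![a, b] ![0, d] τ := by
  simpa using thetaSeries_add_two_smul_lower w ![a, b] ![1, 0] ![0, d] τ

lemma thetaSeries_lower_two_right :
    thetaSeries w ![a, b] ![c, 2] τ = (-1) ^ b * thetaSeries w ![a, b] ![c, 0] τ := by
  simpa using thetaSeries_add_two_smul_lower w ![a, b] ![0, 1] ![c, 0] τ

lemma thetaSeries_lower_neg_one_left :
    thetaSeries w ![a, b] ![-1, d] τ = (-1) ^ (-a) * thetaSeries w ![a, b] ![1, d] τ := by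
  simpa using thetaSeries_add_two_smul_lower w ![a, b] ![-1, 0] ![1, d] τ

lemma thetaSeries_lower_neg_one_right :
    thetaSeries w ![a, b] ![c, -1] τ = (-1) ^ (-b) * thetaSeries w ![a, b] ![c, 1] τ := by
  simpa using thetaSeries_add_two_smul_lower w ![a, b] ![0, -1] ![c, 1] τ

end GenusTwoCharacteristics

section GenusTwoDuplication

local notation "θ[" a:max b:max ";" c:max d:max "]" => thetaSeries 1 ![a, b] ![c, d]
local notation "∂θ[" i "," a:max b:max ";" c:max d:max "]" => thetaSeries (coordWeight i) ![a, b] ![c, d]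

variable {τ : Matrix (Fin 2) (Fin 2) ℂ}

lemma theta_mul_theta (hτ : HasPosDefIm τ) (a b c d c' d' : ℤ) :
    θ[a b; c d] τ * θ[a b; c' d'] τ =
      ∑ k : Fin 2, ∑ l : Fin 2,
        θ[(a + (k : ℕ)) (b + (l : ℕ)); (c + c') (d + d')] ((2 : ℂ) • τ) *
          θ[(k : ℕ) (l : ℕ); (c - c') (d - d')] ((2 : ℂ) • τ) := by
  simp [thetaSeries_one_mul_one _ _ _ hτ, sum_fin_two_arrow, parityVec_vec]

lemma thetaDeriv_mul_theta (hτ : HasPosDefIm τ) (i : Fin 2) (a b c d c' d' : ℤ) :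
    ∂θ[i, a b; c d] τ * θ[a b; c' d'] τ =
      ∑ k : Fin 2, ∑ l : Fin 2,
        (∂θ[i, (a + (k : ℕ)) (b + (l : ℕ)); (c + c') (d + d')] ((2 : ℂ) • τ) *
          θ[(k : ℕ) (l : ℕ); (c - c') (d - d')] ((2 : ℂ) • τ) +
        θ[(a + (k : ℕ)) (b + (l : ℕ)); (c + c') (d + d')] ((2 : ℂ) • τ) *
          ∂θ[i, (k : ℕ) (l : ℕ); (c - c') (d - d')] ((2 : ℂ) • τ)) := by
  simp [thetaSeries_coordWeight_mul_one _ _ _ _ hτ, sum_fin_two_arrow, parityVec_vec]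

/-- The Jacobian determinant of two genus-two theta functions with characteristics `[a; c]` and
`[a'; c']` at `z = 0`, divided by `(2πi)²`. -/
noncomputable def thetaJacobian (a c a' c' : Fin 2 → ℤ) (τ : Matrix (Fin 2) (Fin 2) ℂ) : ℂ :=
  thetaSeries (coordWeight 0) a c τ * thetaSeries (coordWeight 1) a' c' τ -
    thetaSeries (coordWeight 1) a c τ * thetaSeries (coordWeight 0) a' c' τ

lemma thetaJacobian_eq_sum (hτ : HasPosDefIm τ) (a b c d c' d' : ℤ) :
    thetaJacobian ![a, b] ![c, d] ![a, b] ![c', d'] τ =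
      ∑ k : Fin 2, ∑ l : Fin 2, -2 * thetaJacobian ![a + (k : ℕ), b + (l : ℕ)] ![c + c', d + d']
        ![(k : ℕ), (l : ℕ)] ![c - c', d - d'] ((2 : ℂ) • τ) := by
  rw [thetaJacobian, thetaSeries_coordWeight_mul_sub_mul 0 1 _ _ _ hτ, sum_fin_two_arrow]
  simp [thetaJacobian, parityVec_vec]

/-- The normalised Jacobian determinant on the left-hand side of the Rosenhain formula. -/
noncomputable def rosenhainJacobian (τ : Matrix (Fin 2) (Fin 2) ℂ) : ℂ :=
  thetaJacobian ![0, 1] ![0, 1] ![1, 1] ![0, 1] τ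

/-- The product of four even theta constants on the right-hand side of the Rosenhain formula. -/
noncomputable def rosenhainProduct (τ : Matrix (Fin 2) (Fin 2) ℂ) : ℂ :=
  θ[0 0; 1 0] τ * θ[0 0; 1 1] τ * θ[1 1; 1 1] τ * θ[0 1; 1 0] τ

attribute [local simp]
  thetaSeries_upper_two_left thetaSeries_upper_two_right
  thetaSeries_lower_two_left thetaSeries_lower_two_right
  thetaSeries_lower_neg_one_left thetaSeries_lower_neg_one_right
  thetaSeries_one_eq_zero_of_odd thetaSeries_coordWeight_eq_zero_of_even

lemma thetaJacobian_eq_four_mul_rosenhainJacobian (hτ : HasPosDefIm τ) :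
    thetaJacobian ![1, 0] ![1, 0] ![1, 0] ![1, 1] τ = 4 * rosenhainJacobian ((2 : ℂ) • τ) := by
  rw [thetaJacobian_eq_sum hτ]
  simp (disch := decide) [rosenhainJacobian, thetaJacobian]
  ring

lemma theta_mul_eq_four_mul_rosenhainProduct (hτ : HasPosDefIm τ) :
    θ[1 1; 0 0] τ * θ[1 1; 1 1] τ * (θ[0 1; 0 0] τ * θ[0 1; 1 0] τ) =
      4 * rosenhainProduct ((2 : ℂ) • τ) := by
  rw [theta_mul_theta hτ, theta_mul_theta hτ]
  simp (disch := decide) [rosenhainProduct]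
  ring

lemma theta_sq_sub_sq (hτ : HasPosDefIm τ) :
    θ[1 0; 0 0] τ ^ 2 - θ[1 0; 0 1] τ ^ 2 =
      4 * (θ[1 1; 0 0] ((2 : ℂ) • τ) * θ[0 1; 0 0] ((2 : ℂ) • τ)) := by
  rw [sq, sq, theta_mul_theta hτ, theta_mul_theta hτ]
  simp
  ring

lemma thetaDeriv_mul_theta_add (hτ : HasPosDefIm τ) (i : Fin 2) :
    ∂θ[i, 1 0; 1 0] τ * θ[1 0; 0 0] τ + ∂θ[i, 1 0; 1 1] τ * θ[1 0; 0 1] τ =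
      4 * (∂θ[i, 1 0; 1 0] ((2 : ℂ) • τ) * θ[0 0; 1 0] ((2 : ℂ) • τ)) := by
  rw [thetaDeriv_mul_theta hτ, thetaDeriv_mul_theta hτ]
  simp (disch := decide)
  ring

lemma thetaDeriv_mul_theta_add_swap (hτ : HasPosDefIm τ) (i : Fin 2) :
    ∂θ[i, 1 0; 1 0] τ * θ[1 0; 0 1] τ + ∂θ[i, 1 0; 1 1] τ * θ[1 0; 0 0] τ =
      4 * (∂θ[i, 1 0; 1 1] ((2 : ℂ) • τ) * θ[0 0; 1 1] ((2 : ℂ) • τ)) := by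
  rw [thetaDeriv_mul_theta hτ, thetaDeriv_mul_theta hτ]
  simp (disch := decide)
  ring

lemma HasPosDefIm.exists_eq_two_smul (hτ : HasPosDefIm τ) :
    ∃ σ, HasPosDefIm σ ∧ τ = (2 : ℂ) • σ :=
  ⟨((1 / 2 : ℝ) : ℂ) • τ, hτ.smul (by norm_num), by simp [smul_smul]⟩

-- With `τ = 2σ`, this is multiplicativity of `2 × 2` determinants, applied to the linear system
-- `thetaDeriv_mul_theta_add`, `thetaDeriv_mul_theta_add_swap` at `σ`.
lemma thetaJacobian_mul_eq_rosenhainJacobian_mul (hτ : HasPosDefIm τ) :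
    thetaJacobian ![1, 0] ![1, 0] ![1, 0] ![1, 1] τ * (θ[0 0; 1 0] τ * θ[0 0; 1 1] τ) =
      rosenhainJacobian τ * (θ[1 1; 0 0] τ * θ[0 1; 0 0] τ) := by
  obtain ⟨σ, hσ, rfl⟩ := hτ.exists_eq_two_smul
  refine mul_left_cancel₀ (by norm_num : (16 : ℂ) ≠ 0) ?_
  calc 16 * (thetaJacobian ![1, 0] ![1, 0] ![1, 0] ![1, 1] ((2 : ℂ) • σ) *
        (θ[0 0; 1 0] ((2 : ℂ) • σ) * θ[0 0; 1 1] ((2 : ℂ) • σ)))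
      = 4 * (∂θ[0, 1 0; 1 0] ((2 : ℂ) • σ) * θ[0 0; 1 0] ((2 : ℂ) • σ)) *
          (4 * (∂θ[1, 1 0; 1 1] ((2 : ℂ) • σ) * θ[0 0; 1 1] ((2 : ℂ) • σ))) -
        4 * (∂θ[1, 1 0; 1 0] ((2 : ℂ) • σ) * θ[0 0; 1 0] ((2 : ℂ) • σ)) *
          (4 * (∂θ[0, 1 0; 1 1] ((2 : ℂ) • σ) * θ[0 0; 1 1] ((2 : ℂ) • σ))) := by
        rw [thetaJacobian]
        ring
    _ = thetaJacobian ![1, 0] ![1, 0] ![1, 0] ![1, 1] σ *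
          (θ[1 0; 0 0] σ ^ 2 - θ[1 0; 0 1] σ ^ 2) := by
        simp only [← thetaDeriv_mul_theta_add hσ, ← thetaDeriv_mul_theta_add_swap hσ, thetaJacobian]
        ring
    _ = 16 * (rosenhainJacobian ((2 : ℂ) • σ) *
          (θ[1 1; 0 0] ((2 : ℂ) • σ) * θ[0 1; 0 0] ((2 : ℂ) • σ))) := by
        rw [thetaJacobian_eq_four_mul_rosenhainJacobian hσ, theta_sq_sub_sq hσ]
        ring

lemma rosenhainJacobian_two_smul_mul (hτ : HasPosDefIm τ) :
    rosenhainJacobian ((2 : ℂ) • τ) * rosenhainProduct τ =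
      rosenhainJacobian τ * rosenhainProduct ((2 : ℂ) • τ) := by
  refine mul_left_cancel₀ (by norm_num : (4 : ℂ) ≠ 0) ?_
  calc 4 * (rosenhainJacobian ((2 : ℂ) • τ) * rosenhainProduct τ)
      = thetaJacobian ![1, 0] ![1, 0] ![1, 0] ![1, 1] τ * (θ[0 0; 1 0] τ * θ[0 0; 1 1] τ) *
          (θ[1 1; 1 1] τ * θ[0 1; 1 0] τ) := by
        rw [thetaJacobian_eq_four_mul_rosenhainJacobian hτ, rosenhainProduct]
        ring
    _ = rosenhainJacobian τ *
          (θ[1 1; 0 0] τ * θ[1 1; 1 1] τ * (θ[0 1; 0 0] τ * θ[0 1; 1 0] τ)) := by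
        rw [thetaJacobian_mul_eq_rosenhainJacobian_mul hτ]
        ring
    _ = 4 * (rosenhainJacobian τ * rosenhainProduct ((2 : ℂ) • τ)) := by
        rw [theta_mul_eq_four_mul_rosenhainProduct hτ]
        ring

end GenusTwoDuplication

section LeadingTerms

variable {ι : Type*} [Fintype ι]

lemma thetaSummand_smul_mul_cexp (w : (ι → ℝ) → ℂ) (c : ι → ℤ) (τ : Matrix ι ι ℂ) (x : ι → ℝ)
    (s q : ℂ) :
    thetaSummand w c (s • τ) x * cexp (-(π * I * (s * q))) =
      thetaSummand w c 0 x * cexp (π * I * (s * (quadForm τ x - q))) := by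
  have hzero : quadForm (0 : Matrix ι ι ℂ) x = 0 := by simp [quadForm]
  simp only [thetaSummand, mul_assoc (w x), ← Complex.exp_add, quadForm_smul, hzero]
  ring_nf

lemma norm_cexp_pi_mul_I_mul_real (s : ℝ) (z : ℂ) :
    ‖cexp (π * I * (s * z))‖ = Real.exp (-(π * z.im * s)) := by
  rw [norm_exp, mul_assoc, re_ofReal_mul, I_mul_re, im_ofReal_mul]
  ring_nf

lemma tendsto_cexp_pi_mul_I_mul_atTop_zero {z : ℂ} (hz : 0 < z.im) :
    Tendsto (fun s : ℝ => cexp (π * I * (s * z))) atTop (𝓝 0) := by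
  rw [tendsto_zero_iff_norm_tendsto_zero]
  simp only [norm_cexp_pi_mul_I_mul_real]
  exact Real.tendsto_exp_neg_atTop_nhds_zero.comp
    (tendsto_id.const_mul_atTop (mul_pos Real.pi_pos hz))

lemma tendsto_thetaSeries_smul_mul_cexp {w : (ι → ℝ) → ℂ} (hw : HasExpGrowth w) (a c : ι → ℤ)
    {τ : Matrix ι ι ℂ} (hτ : HasPosDefIm τ) {q : ℂ} {S : Finset (ι → ℤ)}
    (hmin : ∀ m ∈ S, quadForm τ (charPoint a m) = q)
    (hlt : ∀ m ∉ S, q.im < (quadForm τ (charPoint a m)).im) :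
    Tendsto (fun s : ℝ => thetaSeries w a c ((s : ℂ) • τ) * cexp (-(π * I * (s * q)))) atTop
      (𝓝 (∑ m ∈ S, thetaSummand w c 0 (charPoint a m))) := by
  classical
  have hle (m : ι → ℤ) : 0 ≤ (quadForm τ (charPoint a m) - q).im := by
    by_cases hm : m ∈ S
    · simp [hmin m hm]
    · simpa using (hlt m hm).le
  have hbound : Summable fun m => ‖thetaSummand w c (((1 : ℝ) : ℂ) • τ) (charPoint a m) *
      cexp (-(π * I * ((1 : ℝ) * q)))‖ := by
    simp only [norm_mul]
    exact (summable_norm_thetaSummand hw a c (hτ.smul one_pos)).mul_right _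
  simp only [thetaSeries, ← tsum_mul_right, thetaSummand_smul_mul_cexp] at hbound ⊢
  rw [sum_eq_tsum_indicator]
  refine tendsto_tsum_of_dominated_convergence hbound (fun m => ?_) ?_
  · by_cases hm : m ∈ S
    · simp [hm, hmin m hm]
    · have hpos : 0 < (quadForm τ (charPoint a m) - q).im := by simpa using hlt m hm
      simpa [hm] using (tendsto_cexp_pi_mul_I_mul_atTop_zero hpos).const_mul
        (thetaSummand w c 0 (charPoint a m))
  · filter_upwards [eventually_ge_atTop 1] with s hs m
    simp only [norm_mul, norm_cexp_pi_mul_I_mul_real]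
    gcongr
    exact mul_nonneg Real.pi_pos.le (hle m)

lemma tendsto_thetaSeries_smul_mul_cexp_of_neg_pair {w : (ι → ℝ) → ℂ} (hw : HasExpGrowth w)
    (a c : ι → ℤ) {τ : Matrix ι ι ℂ} (hτ : HasPosDefIm τ) {y : ι → ℝ} {m₀ m₁ : ι → ℤ}
    (h₀ : charPoint a m₀ = y) (h₁ : charPoint a m₁ = -y) (hne : m₀ ≠ m₁)
    (hlt : ∀ m, m ≠ m₀ → m ≠ m₁ → (quadForm τ y).im < (quadForm τ (charPoint a m)).im) :
    Tendsto (fun s : ℝ => thetaSeries w a c ((s : ℂ) • τ) * cexp (-(π * I * (s * quadForm τ y))))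
      atTop (𝓝 (thetaSummand w c 0 y + thetaSummand w c 0 (-y))) := by
  classical
  rw [← h₁, ← h₀, ← Finset.sum_pair (f := fun m => thetaSummand w c 0 (charPoint a m)) hne, h₀]
  refine tendsto_thetaSeries_smul_mul_cexp hw a c hτ ?_ fun m hm => ?_
  · simp [h₀, h₁, quadForm_neg_vec]
  · simp only [Finset.mem_insert, Finset.mem_singleton, not_or] at hm
    exact hlt m hm.1 hm.2

end LeadingTerms

section SellingReduced

/-- Positivity of the coefficients of the imaginary part of `quadForm τ` in Selling's basis `x²`,
`y²`, `(x + y)²` of the binary quadratic forms. These `τ` form an open cone on which the leading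
terms of the theta series can be read off coordinatewise. -/
def IsSellingReduced (τ : Matrix (Fin 2) (Fin 2) ℂ) : Prop :=
  0 < (τ 0 1 + τ 1 0).im ∧ (τ 0 1 + τ 1 0).im < 2 * (τ 0 0).im ∧
    (τ 0 1 + τ 1 0).im < 2 * (τ 1 1).im

lemma isOpen_setOf_isSellingReduced : IsOpen {τ | IsSellingReduced τ} := by
  have hentry (i j : Fin 2) : Continuous fun τ : Matrix (Fin 2) (Fin 2) ℂ => (τ i j).im := by
    fun_prop
  simp only [IsSellingReduced, add_im]
  exact (isOpen_lt continuous_const ((hentry 0 1).add (hentry 1 0))).inter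
    ((isOpen_lt ((hentry 0 1).add (hentry 1 0)) ((hentry 0 0).const_mul 2)).inter
      (isOpen_lt ((hentry 0 1).add (hentry 1 0)) ((hentry 1 1).const_mul 2)))

lemma im_quadForm_eq_selling (τ : Matrix (Fin 2) (Fin 2) ℂ) (x : Fin 2 → ℝ) :
    2 * (quadForm τ x).im = (2 * (τ 0 0).im - (τ 0 1 + τ 1 0).im) * x 0 ^ 2 +
      (2 * (τ 1 1).im - (τ 0 1 + τ 1 0).im) * x 1 ^ 2 +
      (τ 0 1 + τ 1 0).im * (x 0 + x 1) ^ 2 := by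
  simp only [quadForm, Fin.sum_univ_two, add_im, im_mul_ofReal]
  ring

variable {τ : Matrix (Fin 2) (Fin 2) ℂ}

lemma IsSellingReduced.im_quadForm_lt (hτ : IsSellingReduced τ) {x y : Fin 2 → ℝ}
    (h₀ : y 0 ^ 2 ≤ x 0 ^ 2) (h₁ : y 1 ^ 2 ≤ x 1 ^ 2) (hadd : (y 0 + y 1) ^ 2 ≤ (x 0 + x 1) ^ 2)
    (hlt : y 0 ^ 2 < x 0 ^ 2 ∨ y 1 ^ 2 < x 1 ^ 2 ∨ (y 0 + y 1) ^ 2 < (x 0 + x 1) ^ 2) :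
    (quadForm τ y).im < (quadForm τ x).im := by
  obtain ⟨hγ, hα, hβ⟩ := hτ
  rw [← sub_pos] at hα hβ
  have hα_le := mul_le_mul_of_nonneg_left h₀ hα.le
  have hβ_le := mul_le_mul_of_nonneg_left h₁ hβ.le
  have hγ_le := mul_le_mul_of_nonneg_left hadd hγ.le
  have hx := im_quadForm_eq_selling τ x
  have hy := im_quadForm_eq_selling τ y
  rcases hlt with hlt | hlt | hlt
  · linarith [mul_lt_mul_of_pos_left hlt hα]
  · linarith [mul_lt_mul_of_pos_left hlt hβ]
  · linarith [mul_lt_mul_of_pos_left hlt hγ]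

lemma IsSellingReduced.hasPosDefIm (hτ : IsSellingReduced τ) : HasPosDefIm τ := fun x hx => by
  have hcoord : x 0 ≠ 0 ∨ x 1 ≠ 0 := by
    simpa [funext_iff, Fin.forall_fin_two, or_iff_not_imp_left] using hx
  have hlt := hτ.im_quadForm_lt (x := x) (y := 0) (by simpa using sq_nonneg (x 0))
    (by simpa using sq_nonneg (x 1)) (by simpa using sq_nonneg (x 0 + x 1))
    (hcoord.imp (by simp [sq_pos_iff]) fun h => .inl (by simpa [sq_pos_iff] using h))
  simpa [quadForm] using hlt

lemma one_half_sq_le_intCast_add_half_sq (n : ℤ) : (1 / 2 : ℝ) ^ 2 ≤ (n + 1 / 2) ^ 2 := by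
  have hn : (0 : ℝ) ≤ n * (n + 1) := by
    exact_mod_cast (by rcases le_or_gt 0 n with h | h <;> nlinarith : 0 ≤ n * (n + 1))
  linarith

lemma one_half_sq_lt_intCast_add_half_sq {n : ℤ} (h₀ : n ≠ 0) (h₁ : n ≠ -1) :
    (1 / 2 : ℝ) ^ 2 < (n + 1 / 2) ^ 2 := by
  have hn : (n : ℝ) * (n + 1) ≠ 0 := by
    exact_mod_cast mul_ne_zero h₀ (by omega : n + 1 ≠ 0)
  refine (one_half_sq_le_intCast_add_half_sq n).lt_of_ne fun h => hn ?_
  linarith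

variable {w : (Fin 2 → ℝ) → ℂ}

lemma IsSellingReduced.tendsto_thetaSeries_zero_zero (hτ : IsSellingReduced τ) (hw : HasExpGrowth w)
    (c : Fin 2 → ℤ) :
    Tendsto (fun s : ℝ => thetaSeries w ![0, 0] c ((s : ℂ) • τ)) atTop (𝓝 (w 0)) := by
  have hpoint (m : Fin 2 → ℤ) : charPoint ![0, 0] m = fun i => (m i : ℝ) := by
    ext i
    fin_cases i <;> simp [charPoint]
  have hzero : charPoint ![0, 0] 0 = 0 := by
    rw [hpoint]
    ext
    simp
  have hlim := tendsto_thetaSeries_smul_mul_cexp hw ![0, 0] c hτ.hasPosDefIm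
    (q := 0) (S := {0}) (by simp [hzero, quadForm]) fun m hm =>
      hτ.hasPosDefIm _ fun h => Finset.notMem_singleton.1 hm <| funext fun i => by
        simpa [hpoint] using congrFun h i
  simpa [hzero, thetaSummand, quadForm] using hlim

lemma IsSellingReduced.tendsto_thetaSeries_zero_one (hτ : IsSellingReduced τ) (hw : HasExpGrowth w)
    (c : Fin 2 → ℤ) :
    Tendsto (fun s : ℝ => thetaSeries w ![0, 1] c ((s : ℂ) • τ) *
        cexp (-(π * I * (s * quadForm τ ![0, 1 / 2])))) atTop
      (𝓝 (thetaSummand w c 0 ![0, 1 / 2] + thetaSummand w c 0 (-![0, 1 / 2]))) := by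
  have hpoint (m : Fin 2 → ℤ) : charPoint ![0, 1] m = ![(m 0 : ℝ), m 1 + 1 / 2] := by
    ext i
    fin_cases i <;> simp [charPoint]
  refine tendsto_thetaSeries_smul_mul_cexp_of_neg_pair hw _ c hτ.hasPosDefIm
    (m₀ := ![0, 0]) (m₁ := ![0, -1]) (by simp [hpoint]) (by norm_num [hpoint]) (by decide)
    fun m h₀ h₁ => ?_
  simp only [ne_eq, funext_iff, Fin.forall_fin_two, Matrix.cons_val_zero, Matrix.cons_val_one,
    not_and] at h₀ h₁
  have hadd := one_half_sq_le_intCast_add_half_sq (m 0 + m 1)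
  push_cast at hadd
  rw [hpoint]
  refine hτ.im_quadForm_lt (by simpa using sq_nonneg _)
    (by simpa using one_half_sq_le_intCast_add_half_sq (m 1))
    (by simpa [add_assoc] using hadd) ?_
  by_cases hm : m 0 = 0
  · exact .inr (.inl (by simpa using one_half_sq_lt_intCast_add_half_sq (h₀ hm) (h₁ hm)))
  · exact .inl (by simpa [sq_pos_iff] using hm)

lemma IsSellingReduced.tendsto_thetaSeries_one_one (hτ : IsSellingReduced τ) (hw : HasExpGrowth w)
    (c : Fin 2 → ℤ) :
    Tendsto (fun s : ℝ => thetaSeries w ![1, 1] c ((s : ℂ) • τ) *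
        cexp (-(π * I * (s * quadForm τ ![1 / 2, -1 / 2])))) atTop
      (𝓝 (thetaSummand w c 0 ![1 / 2, -1 / 2] + thetaSummand w c 0 (-![1 / 2, -1 / 2]))) := by
  have hpoint (m : Fin 2 → ℤ) : charPoint ![1, 1] m = ![(m 0 + 1 / 2 : ℝ), m 1 + 1 / 2] := by
    ext i
    fin_cases i <;> simp [charPoint]
  refine tendsto_thetaSeries_smul_mul_cexp_of_neg_pair hw _ c hτ.hasPosDefIm
    (m₀ := ![0, -1]) (m₁ := ![-1, 0]) (by norm_num [hpoint]) (by norm_num [hpoint]) (by decide)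
    fun m h₀ h₁ => ?_
  simp only [ne_eq, funext_iff, Fin.forall_fin_two, Matrix.cons_val_zero, Matrix.cons_val_one,
    not_and] at h₀ h₁
  have hadd : (m 0 + 1 / 2 + (m 1 + 1 / 2) : ℝ) = (m 0 + m 1 + 1 : ℤ) := by
    push_cast
    ring
  rw [hpoint]
  refine hτ.im_quadForm_lt (by simpa using one_half_sq_le_intCast_add_half_sq (m 0))
    (by simpa [neg_div] using one_half_sq_le_intCast_add_half_sq (m 1))
    (by simpa [neg_div] using sq_nonneg _) ?_
  by_cases hm : m 0 + m 1 + 1 = 0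
  · have hm₀ := one_half_sq_lt_intCast_add_half_sq (n := m 0) (by omega) (by omega)
    exact .inl (by simpa using hm₀)
  · have hsq : 0 < (m 0 + 1 / 2 + (m 1 + 1 / 2) : ℝ) ^ 2 := by
      rw [hadd, sq_pos_iff]
      exact_mod_cast hm
    exact .inr (.inr (by simpa [neg_div] using hsq))

end SellingReduced

section RosenhainOnRays

variable {τ : Matrix (Fin 2) (Fin 2) ℂ}

lemma cexp_pi_mul_I_mul_inv_two : cexp (π * I * 2⁻¹) = I := by
  rw [mul_right_comm, ← div_eq_mul_inv, exp_pi_div_two_mul_I]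

/-- The reciprocal of the common leading exponential of `rosenhainJacobian (s • τ)` and
`rosenhainProduct (s • τ)` for Selling reduced `τ`. -/
noncomputable def rosenhainScale (τ : Matrix (Fin 2) (Fin 2) ℂ) (s : ℝ) : ℂ :=
  cexp (-(π * I * (s * quadForm τ ![0, 1 / 2]))) *
    cexp (-(π * I * (s * quadForm τ ![1 / 2, -1 / 2])))

lemma IsSellingReduced.tendsto_rosenhainJacobian (hτ : IsSellingReduced τ) :
    Tendsto (fun s : ℝ => rosenhainJacobian ((s : ℂ) • τ) * rosenhainScale τ s) atTop
      (𝓝 (-1)) := by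
  have h01 (i : Fin 2) := hτ.tendsto_thetaSeries_zero_one (hasExpGrowth_coordWeight i) ![0, 1]
  have h11 (i : Fin 2) := hτ.tendsto_thetaSeries_one_one (hasExpGrowth_coordWeight i) ![0, 1]
  convert ((h01 0).mul (h11 1)).sub ((h01 1).mul (h11 0)) using 2
  · rw [rosenhainJacobian, thetaJacobian, rosenhainScale]
    ring
  · simp [thetaSummand, quadForm, coordWeight, neg_div, Complex.exp_neg, cexp_pi_mul_I_mul_inv_two,
      ← two_mul]

lemma IsSellingReduced.tendsto_rosenhainProduct (hτ : IsSellingReduced τ) :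
    Tendsto (fun s : ℝ => rosenhainProduct ((s : ℂ) • τ) * rosenhainScale τ s) atTop (𝓝 4) := by
  have h00 := hτ.tendsto_thetaSeries_zero_zero hasExpGrowth_one
  have h01 := hτ.tendsto_thetaSeries_zero_one hasExpGrowth_one ![1, 0]
  have h11 := hτ.tendsto_thetaSeries_one_one hasExpGrowth_one ![1, 1]
  convert ((h00 ![1, 0]).mul (h00 ![1, 1])).mul (h11.mul h01) using 2
  · rw [rosenhainProduct, rosenhainScale]
    ring
  · norm_num [thetaSummand, quadForm]

lemma eventually_mul_eq_mul_of_doubling {f g N : ℝ → ℂ} {u v : ℂ} (hv : v ≠ 0)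
    (hf : Tendsto (fun s => f s * N s) atTop (𝓝 u)) (hg : Tendsto (fun s => g s * N s) atTop (𝓝 v))
    (hdouble : ∀ᶠ s in atTop, f (2 * s) * g s = f s * g (2 * s)) :
    ∀ᶠ s in atTop, v * f s = u * g s := by
  have hne : ∀ᶠ s in atTop, g s * N s ≠ 0 := hg.eventually_ne hv
  have hratio : Tendsto (fun s => f s / g s) atTop (𝓝 (u / v)) :=
    (hf.div hg hv).congr' <| hne.mono fun s hs => mul_div_mul_right _ _ (right_ne_zero_of_mul hs)
  obtain ⟨S, hS⟩ := eventually_atTop.1 (hne.and hdouble)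
  filter_upwards [eventually_ge_atTop S, eventually_gt_atTop 0] with s hsS hs
  have hle (n : ℕ) : S ≤ 2 ^ n * s :=
    hsS.trans (le_mul_of_one_le_left hs.le (one_le_pow₀ one_le_two))
  have hg_ne (n : ℕ) : g (2 ^ n * s) ≠ 0 := left_ne_zero_of_mul (hS _ (hle n)).1
  have hconst (n : ℕ) : f (2 ^ n * s) / g (2 ^ n * s) = f s / g s := by
    induction n with
    | zero => simp
    | succ n ih =>
      rw [← ih, div_eq_div_iff (hg_ne _) (hg_ne _), pow_succ', mul_assoc]
      exact (hS _ (hle n)).2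
  have hpow : Tendsto (fun n : ℕ => 2 ^ n * s) atTop atTop :=
    (tendsto_pow_atTop_atTop_of_one_lt one_lt_two).atTop_mul_const hs
  have hlim : f s / g s = u / v :=
    tendsto_nhds_unique (tendsto_const_nhds.congr fun n => (hconst n).symm) (hratio.comp hpow)
  rwa [div_eq_div_iff (by simpa using hg_ne 0) hv, mul_comm (f s)] at hlim

/-- The difference of the two sides of the Rosenhain formula, up to a constant factor. -/
noncomputable def rosenhainDefect (τ : Matrix (Fin 2) (Fin 2) ℂ) : ℂ :=
  4 * rosenhainJacobian τ + rosenhainProduct τ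

lemma IsSellingReduced.eventually_rosenhainDefect_eq_zero (hτ : IsSellingReduced τ) :
    ∀ᶠ s : ℝ in atTop, rosenhainDefect ((s : ℂ) • τ) = 0 := by
  have hdouble : ∀ᶠ s : ℝ in atTop,
      rosenhainJacobian (((2 * s : ℝ) : ℂ) • τ) * rosenhainProduct ((s : ℂ) • τ) =
        rosenhainJacobian ((s : ℂ) • τ) * rosenhainProduct (((2 * s : ℝ) : ℂ) • τ) := by
    filter_upwards [eventually_gt_atTop 0] with s hs
    rw [ofReal_mul, ofReal_ofNat, mul_smul]
    exact rosenhainJacobian_two_smul_mul (hτ.hasPosDefIm.smul hs)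
  filter_upwards [eventually_mul_eq_mul_of_doubling (by norm_num) hτ.tendsto_rosenhainJacobian
    hτ.tendsto_rosenhainProduct hdouble] with s hs
  rw [rosenhainDefect, hs]
  ring

end RosenhainOnRays

section AnalyticContinuation

open AffineMap (lineMap lineMap_apply_module lineMap_apply_one lineMap_apply_zero)

lemma convex_setOf_hasPosDefIm_lineMap {ι : Type*} [Fintype ι] (τ₀ τ₁ : Matrix ι ι ℂ) :
    Convex ℝ {z : ℂ | HasPosDefIm (lineMap τ₀ τ₁ z)} := fun z hz z' hz' p q hp hq hpq => by
  have hcombo : lineMap τ₀ τ₁ (p • z + q • z') = p • lineMap τ₀ τ₁ z + q • lineMap τ₀ τ₁ z' := by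
    simp only [← coe_smul]
    exact Convex.combo_affine_apply (by exact_mod_cast hpq)
  rw [Set.mem_ofPred_eq, hcombo]
  exact convex_setOf_hasPosDefIm hz hz' hp hq hpq

lemma eq_zero_of_eventually_lineMap_eq_zero {ι : Type*} [Fintype ι] {F : Matrix ι ι ℂ → ℂ}
    {τ₀ τ₁ : Matrix ι ι ℂ} (h₀ : HasPosDefIm τ₀) (h₁ : HasPosDefIm τ₁)
    (hF : ∀ z : ℂ, HasPosDefIm (lineMap τ₀ τ₁ z) →
      DifferentiableAt ℂ (fun z : ℂ => F (lineMap τ₀ τ₁ z)) z)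
    (hzero : ∀ᶠ r : ℝ in 𝓝 0, F (lineMap τ₀ τ₁ (r : ℂ)) = 0) : F τ₁ = 0 := by
  let U : Set ℂ := {z | HasPosDefIm (lineMap τ₀ τ₁ z)}
  have hline : Continuous fun z : ℂ => lineMap τ₀ τ₁ z := by
    simp only [lineMap_apply_module]
    fun_prop
  have hU_open : IsOpen U := isOpen_setOf_hasPosDefIm.preimage hline
  have hU_convex : Convex ℝ U := convex_setOf_hasPosDefIm_lineMap τ₀ τ₁
  have hU_zero : 0 ∈ U := by simpa only [U, Set.mem_ofPred_eq, lineMap_apply_zero] using h₀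
  have hU_one : 1 ∈ U := by simpa only [U, Set.mem_ofPred_eq, lineMap_apply_one] using h₁
  have hfreq : ∃ᶠ z : ℂ in 𝓝[≠] 0, F (lineMap τ₀ τ₁ z) = 0 := by
    have hreal : Tendsto ((↑) : ℝ → ℂ) (𝓝[≠] 0) (𝓝[≠] 0) := by
      simpa using continuous_ofReal.continuousWithinAt.tendsto_nhdsWithin
        (s := {0}ᶜ) (t := {0}ᶜ) (x := 0) fun r hr => by simpa using hr
    exact hreal.frequently (hzero.filter_mono nhdsWithin_le_nhds).frequently
  have hEq := (DifferentiableOn.analyticOnNhd (fun z hz => (hF z hz).differentiableWithinAt)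
    hU_open).eqOn_zero_of_preconnected_of_frequently_eq_zero hU_convex.isPreconnected
    hU_zero hfreq
  simpa using hEq hU_one

lemma differentiableAt_rosenhainDefect_comp {γ : ℂ → Matrix (Fin 2) (Fin 2) ℂ}
    (hγ : ∀ i j, Differentiable ℂ fun z => γ z i j) {z : ℂ} (hz : HasPosDefIm (γ z)) :
    DifferentiableAt ℂ (fun z => rosenhainDefect (γ z)) z := by
  have hconst (a c) := differentiableAt_thetaSeries_comp hasExpGrowth_one a c hγ hz
  have hcoord (i a c) :=
    differentiableAt_thetaSeries_comp (hasExpGrowth_coordWeight i) a c hγ hz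
  unfold rosenhainDefect rosenhainJacobian thetaJacobian rosenhainProduct
  fun_prop

lemma rosenhainDefect_eq_zero_of_eventually_lineMap {τ₀ τ₁ : Matrix (Fin 2) (Fin 2) ℂ}
    (h₀ : HasPosDefIm τ₀) (h₁ : HasPosDefIm τ₁)
    (hzero : ∀ᶠ r : ℝ in 𝓝 0, rosenhainDefect (lineMap τ₀ τ₁ (r : ℂ)) = 0) :
    rosenhainDefect τ₁ = 0 := by
  refine eq_zero_of_eventually_lineMap_eq_zero h₀ h₁ (fun z hz =>
    differentiableAt_rosenhainDefect_comp (fun i j => ?_) hz) hzero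
  simp only [lineMap_apply_module, Matrix.add_apply, Matrix.smul_apply]
  fun_prop

lemma IsSellingReduced.rosenhainDefect_eq_zero {τ : Matrix (Fin 2) (Fin 2) ℂ}
    (hτ : IsSellingReduced τ) : rosenhainDefect τ = 0 := by
  obtain ⟨S, hS⟩ := eventually_atTop.1 hτ.eventually_rosenhainDefect_eq_zero
  have hpos : 0 < max S 0 + 1 := by positivity
  refine rosenhainDefect_eq_zero_of_eventually_lineMap (hτ.hasPosDefIm.smul hpos) hτ.hasPosDefIm ?_
  have hline : Continuous fun r : ℝ => (1 - r) * (max S 0 + 1) + r := by fun_prop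
  have hgt : S < (1 - 0) * (max S 0 + 1) + 0 := by linarith [le_max_left S 0]
  filter_upwards [hline.continuousAt.eventually_const_lt hgt] with r hr
  convert hS _ hr.le using 2
  rw [lineMap_apply_module]
  push_cast
  module

lemma HasPosDefIm.rosenhainDefect_eq_zero {τ : Matrix (Fin 2) (Fin 2) ℂ} (hτ : HasPosDefIm τ) :
    rosenhainDefect τ = 0 := by
  have hbase : IsSellingReduced !![2 * I, I; I, 2 * I] := by norm_num [IsSellingReduced]
  refine rosenhainDefect_eq_zero_of_eventually_lineMap hbase.hasPosDefIm hτ ?_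
  have hline : Tendsto (fun r : ℝ => lineMap !![2 * I, I; I, 2 * I] τ (r : ℂ)) (𝓝 0)
      (𝓝 !![2 * I, I; I, 2 * I]) := by
    simp only [lineMap_apply_module]
    refine Continuous.tendsto' (by fun_prop) _ _ (by simp)
  filter_upwards [hline.eventually (isOpen_setOf_isSellingReduced.mem_nhds hbase)] with r hr
  exact hr.rosenhainDefect_eq_zero

end AnalyticContinuation

section RiemannTheta

lemma HasPosDefIm.of_posDefIm {t11 t12 t22 : ℂ} (h : posDefIm t11 t12 t22) :
    HasPosDefIm !![t11, t12; t12, t22] := fun x hx => by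
  have hpos := Matrix.PosDef.dotProduct_mulVec_pos h hx
  simp only [quadForm, dotProduct, Matrix.mulVec, Pi.star_apply, star_trivial, Matrix.of_apply,
    Matrix.cons_val', Matrix.cons_val_fin_one, Matrix.cons_val_zero, Matrix.cons_val_one,
    Fin.sum_univ_two, add_im, im_mul_ofReal] at hpos ⊢
  linarith

lemma theta2_eq_thetaSeries (a b c d : ℤ) (z₁ z₂ t11 t12 t22 : ℂ) :
    theta2 a b c d z₁ z₂ t11 t12 t22 =
      thetaSeries (fun x => cexp (2 * π * I * (x 0 * z₁ + x 1 * z₂))) ![a, b] ![c, d]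
        !![t11, t12; t12, t22] := by
  rw [theta2, thetaSeries, ← (finTwoArrowEquiv ℤ).symm.tsum_eq]
  refine tsum_congr fun m => ?_
  simp only [thetaSummand, quadForm, charPoint, Fin.sum_univ_two, ← Complex.exp_add,
    finTwoArrowEquiv_symm_apply, Matrix.of_apply, Matrix.cons_val_zero, Matrix.cons_val_one]
  push_cast
  ring_nf

lemma theta2_zero_zero (a b c d : ℤ) (t11 t12 t22 : ℂ) :
    theta2 a b c d 0 0 t11 t12 t22 = thetaSeries 1 ![a, b] ![c, d] !![t11, t12; t12, t22] := by
  simp [theta2_eq_thetaSeries, Pi.one_def]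

variable {t11 t12 t22 : ℂ}

lemma theta2d1_eq (a b c d : ℤ) (h : posDefIm t11 t12 t22) :
    theta2d1 a b c d t11 t12 t22 =
      2 * π * I * thetaSeries (coordWeight 0) ![a, b] ![c, d] !![t11, t12; t12, t22] := by
  simp only [theta2d1, theta2_eq_thetaSeries, mul_zero, add_zero]
  exact deriv_thetaSeries_exp_coord 0 _ _ (.of_posDefIm h)

lemma theta2d2_eq (a b c d : ℤ) (h : posDefIm t11 t12 t22) :
    theta2d2 a b c d t11 t12 t22 =
      2 * π * I * thetaSeries (coordWeight 1) ![a, b] ![c, d] !![t11, t12; t12, t22] := by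
  simp only [theta2d2, theta2_eq_thetaSeries, mul_zero, zero_add]
  exact deriv_thetaSeries_exp_coord 1 _ _ (.of_posDefIm h)

lemma theta2d_mul_sub_mul_eq_rosenhainJacobian (h : posDefIm t11 t12 t22) :
    theta2d1 0 1 0 1 t11 t12 t22 * theta2d2 1 1 0 1 t11 t12 t22 -
        theta2d2 0 1 0 1 t11 t12 t22 * theta2d1 1 1 0 1 t11 t12 t22 =
      -4 * π ^ 2 * rosenhainJacobian !![t11, t12; t12, t22] := by
  have h₁₀ := theta2d1_eq 0 1 0 1 h
  have h₁₁ := theta2d1_eq 1 1 0 1 h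
  have h₂₀ := theta2d2_eq 0 1 0 1 h
  have h₂₁ := theta2d2_eq 1 1 0 1 h
  push_cast at h₁₀ h₁₁ h₂₀ h₂₁
  have hsq : (2 * π * I) ^ 2 = -4 * (π : ℂ) ^ 2 := by
    rw [mul_pow, I_sq]
    ring
  rw [h₁₀, h₁₁, h₂₀, h₂₁, rosenhainJacobian, thetaJacobian, ← hsq]
  ring

lemma theta2_mul_eq_rosenhainProduct (t11 t12 t22 : ℂ) :
    theta2 0 0 1 0 0 0 t11 t12 t22 * theta2 0 0 1 1 0 0 t11 t12 t22 *
        theta2 1 1 1 1 0 0 t11 t12 t22 * theta2 0 1 1 0 0 0 t11 t12 t22 =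
      rosenhainProduct !![t11, t12; t12, t22] := by
  simp only [rosenhainProduct, ← theta2_zero_zero]
  push_cast
  rfl

end RiemannTheta

/-- **A Rosenhain derivative formula.**
`θ₁[01;01]·θ₂[11;01] − θ₂[01;01]·θ₁[11;01] = π²·θ[00;10]·θ[00;11]·θ[11;11]·θ[01;10]`. -/
theorem rosenhain_derivative_formula (t11 t12 t22 : ℂ) (hτ : posDefIm t11 t12 t22) :
    theta2d1 0 1 0 1 t11 t12 t22 * theta2d2 1 1 0 1 t11 t12 t22
        - theta2d2 0 1 0 1 t11 t12 t22 * theta2d1 1 1 0 1 t11 t12 t22 =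
      (Real.pi : ℂ) ^ 2 * theta2 0 0 1 0 0 0 t11 t12 t22
        * theta2 0 0 1 1 0 0 t11 t12 t22 * theta2 1 1 1 1 0 0 t11 t12 t22
        * theta2 0 1 1 0 0 0 t11 t12 t22 := by
  have hdefect := (HasPosDefIm.of_posDefIm hτ).rosenhainDefect_eq_zero
  rw [rosenhainDefect, ← theta2_mul_eq_rosenhainProduct] at hdefect
  rw [theta2d_mul_sub_mul_eq_rosenhainJacobian hτ]
  linear_combination -(π : ℂ) ^ 2 * hdefect
end

section
/- Let g₂, g₃, z, w be complex numbers with z² − 3g₂ ≠ 0 satisfying the genus-2 curve equation of the two-gap Lamé potential, w² = −(z² − 3g₂)·(z³ − (9/4)g₂z − (27/4)g₃). Set λ = 2w/(3(z² − 3g₂)), P = −(z³ − 27g₃)/(9(z² − 3g₂)) and P' = 2w(z³ − 9g₂z + 54g₃)/(27(z² − 3g₂)²). Then (i) λ³ − 3λP + P' = 0 (Hermite's cubic relation for the three-sheeted cover), and (ii) (P')² = 4P³ − g₂P − g₃ (so (P, P') lies on the elliptic curve with invariants g₂, g₃; this is the 3-sheeted cover π: C₂ → C₁ associated with the two-gap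 Lamé potential 6℘(x)). -/
/-!
In the coordinates `(z, λ)` the cover is polynomial: `P = λ² + z/3` and `P' = λ(2λ² + z)`.
Hermite's cubic relation is then an identity in `z` and `λ`, while the Weierstrass equation for
`(P, P')` becomes `9(z² - 3g₂)λ² = -(4z³ - 9g₂z - 27g₃)`. This is the equation of the genus-2 curve,
rewritten through `w = (3/2)(z² - 3g₂)λ`.
-/

/-- The genus-2 curve of the two-gap Lamé potential in the coordinates `(z, λ)`, where
`λ = 2w / (3(z² - 3g₂))`. Denominators are cleared, so the definition makes sense over any
commutative ring. -/
def OnLameCurve {R : Type*} [CommRing R] (g2 g3 z lam : R) : Prop :=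
  9 * (z ^ 2 - 3 * g2) * lam ^ 2 = -(4 * z ^ 3 - 9 * g2 * z - 27 * g3)

/-- The coordinate `P` of the image of `(z, λ)` under the three-sheeted cover, as a polynomial in
`z` and `λ`. -/
def lameCoverX {K : Type*} [Field K] (z lam : K) : K :=
  lam ^ 2 + z / 3

/-- The coordinate `P'` of the image of `(z, λ)` under the three-sheeted cover, as a polynomial in
`z` and `λ`. -/
def lameCoverY {R : Type*} [CommRing R] (z lam : R) : R :=
  lam * (2 * lam ^ 2 + z)

section

variable {K : Type*} [Field K] {g2 g3 z lam w : K}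

theorem hermite_cubic_lameCover (h3 : (3 : K) ≠ 0) (z lam : K) :
    lam ^ 3 - 3 * lam * lameCoverX z lam + lameCoverY z lam = 0 := by
  unfold lameCoverX lameCoverY
  field_simp
  ring

theorem weierstrass_lameCover_iff_onLameCurve (h3 : (3 : K) ≠ 0) :
    lameCoverY z lam ^ 2 = 4 * lameCoverX z lam ^ 3 - g2 * lameCoverX z lam - g3 ↔
      OnLameCurve g2 g3 z lam := by
  have h27 : (27 : K) ≠ 0 := (by norm_num : (3 : K) ^ 3 = 27) ▸ pow_ne_zero 3 h3
  have defect_eq : 27 * (lameCoverY z lam ^ 2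
        - (4 * lameCoverX z lam ^ 3 - g2 * lameCoverX z lam - g3))
      = -(9 * (z ^ 2 - 3 * g2) * lam ^ 2 - -(4 * z ^ 3 - 9 * g2 * z - 27 * g3)) := by
    unfold lameCoverX lameCoverY
    field_simp
    ring
  rw [OnLameCurve, ← sub_eq_zero, ← mul_eq_zero_iff_left h27, defect_eq, neg_eq_zero, sub_eq_zero]

theorem onLameCurve_of_sq_eq (h2 : (2 : K) ≠ 0) (h3 : (3 : K) ≠ 0) (hz : z ^ 2 - 3 * g2 ≠ 0)
    (hw : w ^ 2 = -(z ^ 2 - 3 * g2) * (z ^ 3 - (9 / 4) * g2 * z - (27 / 4) * g3)) :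
    OnLameCurve g2 g3 z (2 * w / (3 * (z ^ 2 - 3 * g2))) := by
  have h4 : (4 : K) ≠ 0 := (by norm_num : (2 : K) ^ 2 = 4) ▸ pow_ne_zero 2 h2
  calc 9 * (z ^ 2 - 3 * g2) * (2 * w / (3 * (z ^ 2 - 3 * g2))) ^ 2
      = 4 * w ^ 2 / (z ^ 2 - 3 * g2) := by field_simp; ring
    _ = -(4 * z ^ 3 - 9 * g2 * z - 27 * g3) := by rw [hw]; field_simp

theorem OnLameCurve.lameCoverX_eq_div (h : OnLameCurve g2 g3 z lam) (h3 : (3 : K) ≠ 0)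
    (hz : z ^ 2 - 3 * g2 ≠ 0) :
    lameCoverX z lam = -(z ^ 3 - 27 * g3) / (9 * (z ^ 2 - 3 * g2)) := by
  have h9 : (9 : K) ≠ 0 := (by norm_num : (3 : K) ^ 2 = 9) ▸ pow_ne_zero 2 h3
  have h_third : 9 * (z / 3) = 3 * z := by field_simp; ring
  rw [eq_div_iff (mul_ne_zero h9 hz), lameCoverX]
  rw [OnLameCurve] at h
  linear_combination h + (z ^ 2 - 3 * g2) * h_third

theorem OnLameCurve.lameCoverY_eq_div (h : OnLameCurve g2 g3 z lam) (h3 : (3 : K) ≠ 0)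
    (hz : z ^ 2 - 3 * g2 ≠ 0) :
    lameCoverY z lam = lam * (z ^ 3 - 9 * g2 * z + 54 * g3) / (9 * (z ^ 2 - 3 * g2)) := by
  have h9 : (9 : K) ≠ 0 := (by norm_num : (3 : K) ^ 2 = 9) ▸ pow_ne_zero 2 h3
  rw [eq_div_iff (mul_ne_zero h9 hz), lameCoverY]
  rw [OnLameCurve] at h
  linear_combination 2 * lam * h

theorem lame_three_sheeted_cover_general (h2 : (2 : K) ≠ 0) (h3 : (3 : K) ≠ 0)
    (hz : z ^ 2 - 3 * g2 ≠ 0)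
    (hw : w ^ 2 = -(z ^ 2 - 3 * g2) * (z ^ 3 - (9 / 4) * g2 * z - (27 / 4) * g3)) :
    let lam : K := 2 * w / (3 * (z ^ 2 - 3 * g2))
    let P : K := -(z ^ 3 - 27 * g3) / (9 * (z ^ 2 - 3 * g2))
    let P' : K := 2 * w * (z ^ 3 - 9 * g2 * z + 54 * g3) / (27 * (z ^ 2 - 3 * g2) ^ 2)
    lam ^ 3 - 3 * lam * P + P' = 0 ∧ P' ^ 2 = 4 * P ^ 3 - g2 * P - g3 := by
  intro lam P P'
  have hcurve : OnLameCurve g2 g3 z lam := onLameCurve_of_sq_eq h2 h3 hz hw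
  have hP : P = lameCoverX z lam := (hcurve.lameCoverX_eq_div h3 hz).symm
  have hP' : P' = lameCoverY z lam := by
    rw [hcurve.lameCoverY_eq_div h3 hz, div_mul_eq_mul_div, div_div]
    ring
  rw [hP, hP']
  exact ⟨hermite_cubic_lameCover h3 z lam, (weierstrass_lameCover_iff_onLameCurve h3).2 hcurve⟩

end

/-- **The 3-sheeted cover `π : C₂ → C₁` for the two-gap Lamé potential `6℘(x)`.**
On the genus-2 curve `w² = −(z² − 3g₂)(z³ − (9/4)g₂z − (27/4)g₃)`, with
`λ = 2w/(3(z² − 3g₂))`, `P = −(z³ − 27g₃)/(9(z² − 3g₂))` and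
`P' = 2w(z³ − 9g₂z + 54g₃)/(27(z² − 3g₂)²)`, one has Hermite's cubic relation
`λ³ − 3λP + P' = 0` and `(P')² = 4P³ − g₂P − g₃`. -/
theorem lame_three_sheeted_cover (g2 g3 z w : ℂ) (hz : z ^ 2 - 3 * g2 ≠ 0)
    (hw : w ^ 2 = -(z ^ 2 - 3 * g2) * (z ^ 3 - (9/4) * g2 * z - (27/4) * g3)) :
    let lam : ℂ := 2 * w / (3 * (z ^ 2 - 3 * g2))
    let P : ℂ := -(z ^ 3 - 27 * g3) / (9 * (z ^ 2 - 3 * g2))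
    let P' : ℂ := 2 * w * (z ^ 3 - 9 * g2 * z + 54 * g3) / (27 * (z ^ 2 - 3 * g2) ^ 2)
    lam ^ 3 - 3 * lam * P + P' = 0 ∧ P' ^ 2 = 4 * P ^ 3 - g2 * P - g3 :=
  lame_three_sheeted_cover_general two_ne_zero three_ne_zero hz hw
end

section
/- Let N ≥ 1 and let x₁, …, x_N : I → ℂ be differentiable functions on an open interval I ⊆ ℝ such that for all t ∈ I and all i ≠ j, x_i(t) − x_j(t) ∉ Λ, and such that the locus conditions Σ_{j≠i} ℘'(x_i(t) − x_j(t)) = 0 hold for each i and all t, and the particles evolve by the flow ẋ_i(t) = −12·Σ_{j≠i} ℘(x_i(t) − x_j(t)). Then the function u(x, t) = 2·Σ_{j=1}^N ℘(x − x_j(t)), defined for x ∉ {x_j(t)} + Λ, is a solution of the Korteweg–de Vries equation: ∂ₜu = 6u·∂ₓu − ∂ₓ³u. -/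
/-- The period lattice `Λ = 2ω₁ℤ + 2ω₂ℤ`. -/
def wlattice (ω1 ω2 : ℂ) : Set ℂ :=
  {w | ∃ m n : ℤ, w = 2 * ω1 * m + 2 * ω2 * n}

/-- The lattice point `2ω₁m + 2ω₂n` indexed by `p = (m, n) ∈ ℤ²`. -/
def wpt (ω1 ω2 : ℂ) (p : ℤ × ℤ) : ℂ := 2 * ω1 * (p.1 : ℂ) + 2 * ω2 * (p.2 : ℂ)

/-- The Weierstrass function `℘(z) = 1/z² + Σ_{ω∈Λ\{0}} (1/(z−ω)² − 1/ω²)` for the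
lattice `Λ = 2ω₁ℤ + 2ω₂ℤ`. -/
noncomputable def wp (ω1 ω2 z : ℂ) : ℂ :=
  1 / z ^ 2 + ∑' p : {q : ℤ × ℤ // q ≠ 0},
    (1 / (z - wpt ω1 ω2 p.1) ^ 2 - 1 / (wpt ω1 ω2 p.1) ^ 2)

/-- The invariant `g₂ = 60 Σ_{ω∈Λ\{0}} ω⁻⁴`. -/
noncomputable def wg2 (ω1 ω2 : ℂ) : ℂ :=
  60 * ∑' p : {q : ℤ × ℤ // q ≠ 0}, 1 / (wpt ω1 ω2 p.1) ^ 4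

/-- The invariant `g₃ = 140 Σ_{ω∈Λ\{0}} ω⁻⁶`. -/
noncomputable def wg3 (ω1 ω2 : ℂ) : ℂ :=
  140 * ∑' p : {q : ℤ × ℤ // q ≠ 0}, 1 / (wpt ω1 ω2 p.1) ^ 6

/-- The elliptic KdV solution `u(x, t) = 2 Σ_{j=1}^N ℘(x − x_j(t))`. -/
noncomputable def ellipticU (ω1 ω2 : ℂ) (N : ℕ) (x : Fin N → ℝ → ℂ) (y : ℂ) (t : ℝ) : ℂ :=
  2 * ∑ j : Fin N, wp ω1 ω2 (y - x j t)

/-!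
The elliptic function `F(v) = ∑_{i≠j} ℘(v − xᵢ) ℘(v − xⱼ) − 2 ∑ₖ Cₖ ℘(v − xₖ)`, where
`Cₖ = ∑_{j≠k} ℘(xₖ − xⱼ)`, can only have poles at the points `xₖ` modulo the lattice. There its
singular part is that of `2 ℘(v − xₖ) (∑_{j≠k} ℘(v − xⱼ) − Cₖ)`, and the locus conditions say
exactly that the second factor has a double zero, which cancels the pole of the first. So `F`
is entire and doubly periodic, hence constant by Liouville. Since `∂³℘ = 12 ℘ ∂℘` and the velocity
of `xₖ` is `−12 Cₖ`, the equation `∂F = 0` is KdV for `u = 2 ∑ⱼ ℘(v − xⱼ)`.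
-/

open Filter Topology
open scoped PeriodPair

section Liouville

variable {E : Type*} [NormedAddCommGroup E] [NormedSpace ℂ E] {f : ℂ → E}

theorem exists_differentiable_eventuallyEq_nhdsNE (hf : Meromorphic f)
    (hord : ∀ z, 0 ≤ meromorphicOrderAt f z) :
    ∃ g : ℂ → E, Differentiable ℂ g ∧ ∀ z, g =ᶠ[𝓝[≠] z] f := by
  have hfU : MeromorphicOn f Set.univ := hf.meromorphicOn
  refine ⟨toMeromorphicNFOn f Set.univ, fun z ↦ ?_,
    fun z ↦ hfU.toMeromorphicNFOn_eq_self_on_nhdsNE (Set.mem_univ z)⟩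
  have hnf := meromorphicNFOn_toMeromorphicNFOn f Set.univ (Set.mem_univ z)
  refine (hnf.meromorphicOrderAt_nonneg_iff_analyticAt.mp ?_).differentiableAt
  rw [meromorphicOrderAt_toMeromorphicNFOn hfU (Set.mem_univ z)]
  exact hord z

theorem exists_eq_const_of_periodic_of_meromorphicOrderAt_nonneg
    (Λ : Submodule ℤ ℂ) [DiscreteTopology Λ] [IsZLattice ℝ Λ]
    (hf : Meromorphic f) (hper : ∀ l ∈ Λ, f.Periodic l)
    (hord : ∀ z, 0 ≤ meromorphicOrderAt f z) :
    ∃ c, ∀ z, ContinuousAt f z → f z = c := by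
  obtain ⟨g, hg, hgf⟩ := exists_differentiable_eventuallyEq_nhdsNE hf hord
  have eq_of_eventuallyEq {f₁ f₂ : ℂ → E} {z : ℂ} (h₁ : ContinuousAt f₁ z)
      (h₂ : ContinuousAt f₂ z) (h : f₁ =ᶠ[𝓝[≠] z] f₂) : f₁ z = f₂ z :=
    ((h₁.eventuallyEq_nhds_iff_eventuallyEq_nhdsNE h₂).mp h).eq_of_nhds
  have hgper (z l : ℂ) (hl : l ∈ Λ) : g (z + l) = g z := by
    have htrans : Tendsto (· + l) (𝓝[≠] z) (𝓝[≠] (z + l)) :=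
      ((Homeomorph.addRight l).map_punctured_nhds_eq z).le
    refine eq_of_eventuallyEq (f₁ := fun w ↦ g (w + l)) ?_ hg.continuous.continuousAt ?_
    · exact (hg.continuous.comp (continuous_add_const l)).continuousAt
    filter_upwards [htrans.eventually (hgf (z + l)), hgf z] with w hwl hw
    rw [hwl, hper l hl w, hw]
  have hbdd : Bornology.IsBounded (Set.range g) :=
    (IsZLattice.isCompact_range_of_periodic Λ g hg.continuous hgper).isBounded
  exact ⟨g 0, fun z hz ↦
    (eq_of_eventuallyEq hz hg.continuous.continuousAt (hgf z).symm).trans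
      (hg.apply_eq_apply_of_bounded hbdd z 0)⟩

end Liouville

theorem two_le_meromorphicOrderAt_of_hasDerivAt_zero {𝕜 E : Type*} [NontriviallyNormedField 𝕜]
    [CharZero 𝕜] [NormedAddCommGroup E] [NormedSpace 𝕜 E] [CompleteSpace E] {f : 𝕜 → E} {z : 𝕜}
    (hf : AnalyticAt 𝕜 f z) (hz : f z = 0) (hderiv : HasDerivAt f 0 z) :
    2 ≤ meromorphicOrderAt f z := by
  have horder : ((2 : ℕ) : ℕ∞) ≤ analyticOrderAt f z := by
    rw [natCast_le_analyticOrderAt_iff_iteratedDeriv_eq_zero hf]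
    intro i hi
    interval_cases i
    · simpa using hz
    · simpa using hderiv.deriv
  rw [hf.meromorphicOrderAt_eq]
  exact ENat.monotone_map_iff.mpr Nat.mono_cast horder

section SumOfTranslates

variable {𝕜 ι : Type*} [NontriviallyNormedField 𝕜] [Fintype ι] {S : Set 𝕜} {f f' : 𝕜 → 𝕜}
  {x : ι → 𝕜} {z : 𝕜}

theorem hasDerivAt_sum_comp_sub (hf : ∀ w ∉ S, HasDerivAt f (f' w) w)
    (hz : ∀ j, z - x j ∉ S) :
    HasDerivAt (fun v ↦ ∑ j, f (v - x j)) (∑ j, f' (z - x j)) z :=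
  HasDerivAt.fun_sum fun j _ ↦ (hf _ (hz j)).comp_sub_const z (x j)

theorem deriv_sum_comp_sub_eventuallyEq (hS : IsClosed S)
    (hf : ∀ w ∉ S, HasDerivAt f (f' w) w) (hz : ∀ j, z - x j ∉ S) :
    deriv (fun v ↦ ∑ j, f (v - x j)) =ᶠ[𝓝 z] fun v ↦ ∑ j, f' (v - x j) := by
  have hnear : ∀ᶠ v in 𝓝 z, ∀ j, v - x j ∉ S := eventually_all.mpr fun j ↦
    (by fun_prop : Continuous (· - x j)).continuousAt.eventually
      (hS.isOpen_compl.mem_nhds (hz j))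
  filter_upwards [hnear] with v hv using (hasDerivAt_sum_comp_sub hf hv).deriv

end SumOfTranslates

section Weierstrass

variable (L : PeriodPair)

theorem hasDerivAt_weierstrassP {z : ℂ} (hz : z ∉ L.lattice) :
    HasDerivAt ℘[L] (℘'[L] z) z := by
  rw [← L.deriv_weierstrassP]
  exact (L.analyticOnNhd_weierstrassP z hz).differentiableAt.hasDerivAt

theorem analyticAt_weierstrassP_sub {a z : ℂ} (hz : z - a ∉ L.lattice) :
    AnalyticAt ℂ (fun v ↦ ℘[L] (v - a)) z :=
  (L.analyticOnNhd_weierstrassP _ hz).fun_comp (f := (· - a)) (by fun_prop)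

theorem meromorphicOrderAt_derivWeierstrassP_ne_top (z : ℂ) :
    meromorphicOrderAt ℘'[L] z ≠ ⊤ := by
  have hzero : meromorphicOrderAt ℘'[L] 0 = ((-3 : ℤ) : WithTop ℤ) := by
    rw [← L.deriv_weierstrassP]
    exact meromorphicOrderAt_deriv (by norm_num) (L.order_weierstrassP 0 (zero_mem _))
  exact L.meromorphic_derivWeierstrassP.meromorphicOn.meromorphicOrderAt_ne_top_of_isPreconnected
    isPreconnected_univ (Set.mem_univ 0) (Set.mem_univ z) (by simp [hzero])

theorem derivWeierstrassP_mul_deriv_derivWeierstrassP {z : ℂ} (hz : z ∉ L.lattice) :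
    ℘'[L] z * deriv ℘'[L] z = ℘'[L] z * (6 * ℘[L] z ^ 2 - L.g₂ / 2) := by
  have hP := hasDerivAt_weierstrassP L hz
  have hP' := (L.analyticOnNhd_derivWeierstrassP z hz).differentiableAt.hasDerivAt
  have hcubic : (fun w ↦ ℘'[L] w ^ 2) =ᶠ[𝓝 z]
      fun w ↦ 4 * ℘[L] w ^ 3 - L.g₂ * ℘[L] w - L.g₃ := by
    filter_upwards [L.isClosed_lattice.isOpen_compl.mem_nhds hz] with w hw
    exact L.derivWeierstrassP_sq w hw
  have hderiv := ((hP'.fun_pow 2).congr_of_eventuallyEq hcubic.symm).unique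
    ((((hP.fun_pow 3).const_mul 4).fun_sub (hP.const_mul L.g₂)).sub_const L.g₃)
  simp only [Nat.cast_ofNat, Nat.add_one_sub_one, pow_one] at hderiv
  linear_combination hderiv / 2

theorem deriv_derivWeierstrassP {z : ℂ} (hz : z ∉ L.lattice) :
    deriv ℘'[L] z = 6 * ℘[L] z ^ 2 - L.g₂ / 2 := by
  have hP := L.analyticOnNhd_weierstrassP z hz
  have hP'' := (L.analyticOnNhd_derivWeierstrassP z hz).deriv
  have hne : ∀ᶠ w in 𝓝[≠] z, ℘'[L] w ≠ 0 :=
    (meromorphicOrderAt_ne_top_iff_eventually_ne_zero (L.meromorphic_derivWeierstrassP z)).mp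
      (meromorphicOrderAt_derivWeierstrassP_ne_top L z)
  have hlattice : ∀ᶠ w in 𝓝[≠] z, w ∉ L.lattice :=
    mem_nhdsWithin_of_mem_nhds (L.isClosed_lattice.isOpen_compl.mem_nhds hz)
  have heq : deriv ℘'[L] =ᶠ[𝓝[≠] z] fun w ↦ 6 * ℘[L] w ^ 2 - L.g₂ / 2 := by
    filter_upwards [hne, hlattice] with w hw hwL
    exact mul_left_cancel₀ hw (derivWeierstrassP_mul_deriv_derivWeierstrassP L hwL)
  exact ((hP''.continuousAt.eventuallyEq_nhds_iff_eventuallyEq_nhdsNE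
    (by fun_prop)).mp heq).eq_of_nhds

theorem hasDerivAt_deriv_derivWeierstrassP {z : ℂ} (hz : z ∉ L.lattice) :
    HasDerivAt (deriv ℘'[L]) (12 * (℘[L] z * ℘'[L] z)) z := by
  have heq : deriv ℘'[L] =ᶠ[𝓝 z] fun w ↦ 6 * ℘[L] w ^ 2 - L.g₂ / 2 := by
    filter_upwards [L.isClosed_lattice.isOpen_compl.mem_nhds hz] with w hw
    exact deriv_derivWeierstrassP L hw
  have hP := hasDerivAt_weierstrassP L hz
  refine ((((hP.fun_pow 2).const_mul 6).sub_const _).congr_of_eventuallyEq heq).congr_deriv ?_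
  simp only [Nat.cast_ofNat, Nat.add_one_sub_one, pow_one]
  ring

theorem deriv_deriv_deriv_sum_weierstrassP {ι : Type*} [Fintype ι] {x : ι → ℂ} {z : ℂ}
    (hz : ∀ j, z - x j ∉ L.lattice) :
    deriv (deriv (deriv fun v ↦ ∑ j, ℘[L] (v - x j))) z =
      12 * ∑ j, ℘[L] (z - x j) * ℘'[L] (z - x j) := by
  have hfirst := deriv_sum_comp_sub_eventuallyEq L.isClosed_lattice
    (fun _ ↦ hasDerivAt_weierstrassP L) hz
  have hsecond := deriv_sum_comp_sub_eventuallyEq L.isClosed_lattice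
    (fun w hw ↦ (L.analyticOnNhd_derivWeierstrassP w hw).differentiableAt.hasDerivAt) hz
  have hthird := hasDerivAt_sum_comp_sub (fun _ ↦ hasDerivAt_deriv_derivWeierstrassP L) hz
  rw [(hfirst.deriv.trans hsecond).deriv_eq, hthird.deriv, Finset.mul_sum]

end Weierstrass

section PairSum

variable {ι : Type*} (L : PeriodPair) (x c : ι → ℂ)

/-- The elliptic function `∑_{i≠j} ℘(v − xᵢ) ℘(v − xⱼ) − 2 ∑ⱼ cⱼ ℘(v − xⱼ)`, with indices ranging
over `s`. The sum over `i ≠ j` is encoded as the square of the sum minus the sum of the squares. -/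
noncomputable def pairSum (s : Finset ι) (v : ℂ) : ℂ :=
  (∑ j ∈ s, ℘[L] (v - x j)) ^ 2 - ∑ j ∈ s, ℘[L] (v - x j) ^ 2 -
    2 * ∑ j ∈ s, c j * ℘[L] (v - x j)

theorem pairSum_eq_add_erase [DecidableEq ι] {s : Finset ι} {k : ι} (hk : k ∈ s) :
    pairSum L x c s =
      (fun v ↦ ℘[L] (v - x k) * (2 * (∑ j ∈ s.erase k, ℘[L] (v - x j) - c k))) +
        pairSum L x c (s.erase k) := by
  funext v
  simp only [pairSum, Pi.add_apply, ← Finset.add_sum_erase s _ hk]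
  ring

theorem periodic_pairSum (s : Finset ι) {l : ℂ} (hl : l ∈ L.lattice) :
    (pairSum L x c s).Periodic l := by
  intro v
  have hP (a : ℂ) : ℘[L] (v + l - a) = ℘[L] (v - a) := by
    rw [add_sub_right_comm]
    exact L.periodic_weierstrassP ⟨l, hl⟩ _
  simp only [pairSum, hP]

theorem meromorphic_pairSum (s : Finset ι) : Meromorphic (pairSum L x c s) := by
  intro z
  unfold pairSum
  fun_prop

variable {x}

theorem analyticAt_pairSum {s : Finset ι} {z : ℂ} (hz : ∀ j ∈ s, z - x j ∉ L.lattice) :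
    AnalyticAt ℂ (pairSum L x c s) z := by
  have hP : ∀ j ∈ s, AnalyticAt ℂ (fun v ↦ ℘[L] (v - x j)) z :=
    fun j hj ↦ analyticAt_weierstrassP_sub L (hz j hj)
  unfold pairSum
  fun_prop

theorem hasDerivAt_pairSum {s : Finset ι} {z : ℂ} (hz : ∀ j ∈ s, z - x j ∉ L.lattice) :
    HasDerivAt (pairSum L x c s)
      (2 * ((∑ j ∈ s, ℘[L] (z - x j)) * ∑ j ∈ s, ℘'[L] (z - x j) -
        ∑ j ∈ s, ℘[L] (z - x j) * ℘'[L] (z - x j) - ∑ j ∈ s, c j * ℘'[L] (z - x j))) z := by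
  have hP : ∀ j ∈ s, HasDerivAt (fun v ↦ ℘[L] (v - x j)) (℘'[L] (z - x j)) z :=
    fun j hj ↦ (hasDerivAt_weierstrassP L (hz j hj)).comp_sub_const z (x j)
  refine ((((HasDerivAt.fun_sum hP).fun_pow 2).fun_sub
    (HasDerivAt.fun_sum fun j hj ↦ (hP j hj).fun_pow 2)).fun_sub
    ((HasDerivAt.fun_sum fun j hj ↦ (hP j hj).const_mul (c j)).const_mul 2)).congr_deriv ?_
  simp only [Nat.cast_ofNat, Nat.add_one_sub_one, pow_one, mul_assoc, ← Finset.mul_sum]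
  ring

end PairSum

section Locus

variable {ι : Type*} [Fintype ι] [DecidableEq ι] (L : PeriodPair) (x : ι → ℂ)

/-- The elliptic locus `𝓛` of the period pair `L`: configurations of points, pairwise distinct
modulo the lattice, with `∑_{j≠i} ℘'(xᵢ − xⱼ) = 0` for every `i`. -/
structure IsLocusConfiguration : Prop where
  sub_notMem_lattice : ∀ i j, i ≠ j → x i - x j ∉ L.lattice
  sum_derivWeierstrassP_eq_zero :
    ∀ i, ∑ j ∈ Finset.univ.erase i, ℘'[L] (x i - x j) = 0

/-- The constant `Cₖ = ∑_{j≠k} ℘(xₖ − xⱼ)`, which up to the factor `-12` is the velocity of the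
`k`-th particle under the flow. -/
noncomputable def interaction (k : ι) : ℂ :=
  ∑ j ∈ Finset.univ.erase k, ℘[L] (x k - x j)

namespace IsLocusConfiguration

variable {L x}

theorem sub_notMem_lattice_of_sub_mem (hx : IsLocusConfiguration L x)
    {k : ι} {z : ℂ} (hz : z - x k ∈ L.lattice) :
    ∀ j ∈ Finset.univ.erase k, z - x j ∉ L.lattice := by
  intro j hj hzj
  refine hx.sub_notMem_lattice k j (Finset.ne_of_mem_erase hj).symm ?_
  simpa using L.lattice.sub_mem hzj hz

theorem two_le_meromorphicOrderAt_sum_sub_interaction (hx : IsLocusConfiguration L x)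
    {k : ι} {z : ℂ} (hz : z - x k ∈ L.lattice) :
    2 ≤ meromorphicOrderAt
      (fun v ↦ 2 * (∑ j ∈ Finset.univ.erase k, ℘[L] (v - x j) - interaction L x k)) z := by
  have hzj := hx.sub_notMem_lattice_of_sub_mem hz
  have hshift_P (j : ι) : ℘[L] (z - x j) = ℘[L] (x k - x j) := by
    simpa using L.weierstrassP_add_coe (x k - x j) ⟨z - x k, hz⟩
  have hshift_P' (j : ι) : ℘'[L] (z - x j) = ℘'[L] (x k - x j) := by
    simpa using L.derivWeierstrassP_add_coe (x k - x j) ⟨z - x k, hz⟩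
  have hP : ∀ j ∈ Finset.univ.erase k, AnalyticAt ℂ (fun v ↦ ℘[L] (v - x j)) z :=
    fun j hj ↦ analyticAt_weierstrassP_sub L (hzj j hj)
  refine two_le_meromorphicOrderAt_of_hasDerivAt_zero (by fun_prop) ?_ ?_
  · simp only [interaction, hshift_P, sub_self, mul_zero]
  · refine (((HasDerivAt.fun_sum fun j hj ↦ (hasDerivAt_weierstrassP L
      (hzj j hj)).comp_sub_const z (x j)).sub_const _).const_mul 2).congr_deriv ?_
    simp only [hshift_P', hx.sum_derivWeierstrassP_eq_zero, mul_zero]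

theorem meromorphicOrderAt_pairSum_nonneg (hx : IsLocusConfiguration L x) (z : ℂ) :
    0 ≤ meromorphicOrderAt (pairSum L x (interaction L x) Finset.univ) z := by
  by_cases hz : ∀ j, z - x j ∉ L.lattice
  · exact (analyticAt_pairSum L _ fun j _ ↦ hz j).meromorphicOrderAt_nonneg
  push Not at hz
  obtain ⟨k, hk⟩ := hz
  have hpole : meromorphicOrderAt (fun v ↦ ℘[L] (v - x k)) z = -2 := by
    rw [meromorphicOrderAt_fun_comp_sub_const_eq_meromorphicOrderAt, L.order_weierstrassP _ hk]
  have hzero := hx.two_le_meromorphicOrderAt_sum_sub_interaction hk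
  have hrest := analyticAt_pairSum L (interaction L x) (hx.sub_notMem_lattice_of_sub_mem hk)
  rw [pairSum_eq_add_erase L x _ (Finset.mem_univ k)]
  refine le_trans (le_min ?_ hrest.meromorphicOrderAt_nonneg)
    (meromorphicOrderAt_add (by fun_prop) hrest.meromorphicAt)
  rw [fun_meromorphicOrderAt_mul (by fun_prop) (by fun_prop), hpole]
  calc (0 : WithTop ℤ) = -2 + 2 := by rfl
    _ ≤ _ := by gcongr

theorem sum_weierstrassP_mul_sum_derivWeierstrassP (hx : IsLocusConfiguration L x)
    {z : ℂ} (hz : ∀ j, z - x j ∉ L.lattice) :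
    (∑ j, ℘[L] (z - x j)) * ∑ j, ℘'[L] (z - x j) =
      ∑ j, ℘[L] (z - x j) * ℘'[L] (z - x j) + ∑ j, interaction L x j * ℘'[L] (z - x j) := by
  obtain ⟨C, hC⟩ := exists_eq_const_of_periodic_of_meromorphicOrderAt_nonneg L.lattice
    (meromorphic_pairSum L x (interaction L x) Finset.univ)
    (fun _ ↦ periodic_pairSum L x _ _) hx.meromorphicOrderAt_pairSum_nonneg
  have hconst : pairSum L x (interaction L x) Finset.univ =ᶠ[𝓝 z] fun _ ↦ C := by
    filter_upwards [(analyticAt_pairSum L _ fun j _ ↦ hz j).eventually_analyticAt] with w hw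
    exact hC w hw.continuousAt
  have hderiv := (hasDerivAt_pairSum L (interaction L x) fun j _ ↦ hz j).unique
    ((hasDerivAt_const z C).congr_of_eventuallyEq hconst)
  linear_combination hderiv / 2

end IsLocusConfiguration

end Locus

theorem kdv_elliptic_solution_general {𝕜 ι : Type*} [NontriviallyNormedField 𝕜] [NormedAlgebra 𝕜 ℂ]
    [Fintype ι] [DecidableEq ι] (L : PeriodPair) {x : ι → 𝕜 → ℂ} {t : 𝕜}
    (hlocus : IsLocusConfiguration L (x · t))
    (hflow : ∀ i, HasDerivAt (x i) (-12 * interaction L (x · t) i) t)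
    {y : ℂ} (hy : ∀ j, y - x j t ∉ L.lattice) :
    HasDerivAt (fun s ↦ 2 * ∑ j, ℘[L] (y - x j s))
      (6 * (2 * ∑ j, ℘[L] (y - x j t)) * deriv (fun v ↦ 2 * ∑ j, ℘[L] (v - x j t)) y -
        deriv (deriv (deriv fun v ↦ 2 * ∑ j, ℘[L] (v - x j t))) y) t := by
  have htime : HasDerivAt (fun s ↦ 2 * ∑ j, ℘[L] (y - x j s))
      (2 * ∑ j, -(-12 * interaction L (x · t) j) * ℘'[L] (y - x j t)) t :=
    HasDerivAt.const_mul _ <| HasDerivAt.fun_sum fun j _ ↦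
      (hasDerivAt_weierstrassP L (hy j)).scomp (h := fun s ↦ y - x j s) t ((hflow j).const_sub y)
  have hspace := hasDerivAt_sum_comp_sub (fun _ ↦ hasDerivAt_weierstrassP L) hy
  refine htime.congr_deriv ?_
  simp only [deriv_const_mul_field', hspace.deriv, deriv_deriv_deriv_sum_weierstrassP L hy,
    neg_mul, neg_neg, mul_assoc, ← Finset.mul_sum]
  linear_combination -24 * hlocus.sum_weierstrassP_mul_sum_derivWeierstrassP hy

section PeriodPairOfHalfPeriods

variable {ω1 ω2 : ℂ} (hind : LinearIndependent ℝ ![2 * ω1, 2 * ω2])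

theorem mem_wlattice_iff_mem_lattice {z : ℂ} :
    z ∈ wlattice ω1 ω2 ↔ z ∈ (PeriodPair.mk _ _ hind).lattice := by
  simp only [wlattice, Set.mem_ofPred_eq, PeriodPair.mem_lattice, mul_comm, eq_comm]

theorem hasSum_weierstrassP_wpt (z : ℂ) :
    HasSum (fun p ↦ 1 / (z - wpt ω1 ω2 p) ^ 2 - 1 / wpt ω1 ω2 p ^ 2)
      (℘[PeriodPair.mk _ _ hind] z) := by
  set L := PeriodPair.mk _ _ hind
  have hpoint (p : ℤ × ℤ) : (L.latticeEquivProd.symm p : ℂ) = wpt ω1 ω2 p := by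
    rw [L.latticeEquiv_symm_apply, wpt, mul_comm, mul_comm (p.2 : ℂ)]
  simpa only [Function.comp_def, LinearEquiv.coe_toEquiv, hpoint] using
    L.latticeEquivProd.symm.toEquiv.hasSum_iff.mpr (L.hasSum_weierstrassP z)

theorem wp_eq_weierstrassP : wp ω1 ω2 = ℘[PeriodPair.mk _ _ hind] := by
  funext z
  have hsum := hasSum_weierstrassP_wpt hind z
  rw [← hsum.tsum_eq, ← hsum.summable.tsum_subtype_add_tsum_subtype_compl {0}, wp]
  congr 1
  simp [wpt]

end PeriodPairOfHalfPeriods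

/-- **Elliptic solutions of KdV from the Calogero–Moser flow on the locus.**
If the pairwise distinct (mod `Λ`) particles `x₁, …, x_N` satisfy the locus conditions
`Σ_{j≠i} ℘'(x_i − x_j) = 0` and the flow `ẋ_i = −12 Σ_{j≠i} ℘(x_i − x_j)`, then
`u(x, t) = 2 Σ_j ℘(x − x_j(t))` solves KdV: `∂ₜu = 6u·∂ₓu − ∂ₓ³u`. -/
theorem kdv_elliptic_solution (ω1 ω2 : ℂ)
    (hind : LinearIndependent ℝ ![2 * ω1, 2 * ω2])
    (N : ℕ) (hN : 1 ≤ N) (I : Set ℝ) (hI : IsOpen I) (x : Fin N → ℝ → ℂ)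
    (hdiff : ∀ i, DifferentiableOn ℝ (x i) I)
    (hdist : ∀ t ∈ I, ∀ i j, i ≠ j → x i t - x j t ∉ wlattice ω1 ω2)
    (hlocus : ∀ t ∈ I, ∀ i,
      ∑ j ∈ Finset.univ.erase i, deriv (wp ω1 ω2) (x i t - x j t) = 0)
    (hflow : ∀ t ∈ I, ∀ i,
      deriv (x i) t = -12 * ∑ j ∈ Finset.univ.erase i, wp ω1 ω2 (x i t - x j t)) :
    ∀ t ∈ I, ∀ y : ℂ, (∀ j, y - x j t ∉ wlattice ω1 ω2) →
      deriv (fun s => ellipticU ω1 ω2 N x y s) t =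
        6 * ellipticU ω1 ω2 N x y t * deriv (fun v => ellipticU ω1 ω2 N x v t) y
          - deriv (deriv (deriv (fun v => ellipticU ω1 ω2 N x v t))) y := by
  intro t ht y hy
  simp only [ellipticU, wp_eq_weierstrassP hind, mem_wlattice_iff_mem_lattice hind,
    PeriodPair.deriv_weierstrassP] at *
  refine (kdv_elliptic_solution_general _ ⟨hdist t ht, hlocus t ht⟩ (fun i ↦ ?_) hy).deriv
  rw [interaction, ← hflow t ht i]
  exact ((hdiff i).differentiableAt (hI.mem_nhds ht)).hasDerivAt
end
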